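/- arXiv:1501.03420 — 2 statements merged into one kernel-verified Lean document; each statement's English description precedes it below -/
import Mathlib

section
/- Let C be a Jacobi matrix with weights {a_n} and diagonal {b_n}. Assume: (a) a_n → ∞; (b) ∑_{n≥0} 1/a_n² = ∞; (c) ∑_{n≥0} [ (a_{n+1}/a_n)² − 1 ]⁻ < ∞; (d) limsup_{n→∞} |b_n|/a_n < 2; (e) ∑_{n≥0} |b_{n+1} − b_n|/a_n < ∞. Then C is self-adjoint, σ_p(C) = ∅, and σ(C) = ℝ. -/
/-!
Since `a n → ∞`, divergence of `∑ 1 / a n ^ 2` forces `∑ 1 / a n = ∞`, which is Carleman's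
condition: for `x, y` in the maximal domain the Wronskian `a n (x̄ₙ₊₁ yₙ - x̄ₙ yₙ₊₁)` converges,
and a nonzero limit would make `1 / a n` summable.  Hence the operator is symmetric on its maximal
domain (`jacobi_symm`); testing against the unit vectors shows that the adjoint has no larger
domain.

For real `l` and a real solution `u` of the eigenvalue recurrence, consider the quadratic form
`S n = a n ^ 2 (u n ^ 2 + u (n+1) ^ 2) + (b n - l) a n u n u (n+1)`.  The recurrence gives
`S (n+1) - S n = (a (n+1) ^ 2 - a n ^ 2) u (n+1) ^ 2 + (b (n+1) - b n) a n u n u (n+1)`,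
while `S n` is comparable to `a n ^ 2 (u n ^ 2 + u (n+1) ^ 2)` because `|b n - l| ≤ r a n`
eventually, with `r < 2`.  By the two summability conditions `S (n+1) ≥ (1 - d n) S n` with `d`
summable, so a positive `S` stays bounded below, and `u n ^ 2 + u (n+1) ^ 2` dominates a
multiple of the nonsummable `1 / a n ^ 2`.  Thus square-summable solutions vanish
(`real_solution_eq_zero`, `solution_eq_zero`).  The recurrence is only needed from index `1` on,
so the same lemma shows both that there are no eigenvalues and that `δ₀` is never in the range
of `C - l` for real `l`.

For nonreal `l`, symmetry gives `|Im l| ‖x‖ ≤ ‖(C - l) x‖`, so the range of `C - l` is closed, and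
its orthogonal complement consists of eigenvectors for `l̄`, hence is trivial.
-/


open Filter Topology

noncomputable section

/-- Membership in the weighted ℓ² space with weight `w`. -/
def MemL2w (w : ℕ → ℝ) (f : ℕ → ℂ) : Prop :=
  Summable fun n => w n * ‖f n‖ ^ 2

/-- The weighted ℓ² inner product. -/
def innerW (w : ℕ → ℝ) (f g : ℕ → ℂ) : ℂ :=
  ∑' n, (w n : ℂ) * star (f n) * g n

/-- The formal tridiagonal action of the Jacobi matrix with off-diagonal entries `a`
and diagonal entries `b`:  `(Cx)₀ = b₀x₀ + a₀x₁`,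
`(Cx)ₙ = aₙ₋₁xₙ₋₁ + bₙxₙ + aₙxₙ₊₁` for `n ≥ 1`. -/
def jacobiAct (a b : ℕ → ℝ) (x : ℕ → ℂ) : ℕ → ℂ
  | 0 => (b 0 : ℂ) * x 0 + (a 0 : ℂ) * x 1
  | n + 1 => (a n : ℂ) * x n + (b (n + 1) : ℂ) * x (n + 1) + (a (n + 1) : ℂ) * x (n + 2)

/-- The maximal domain of the formal operator `T` inside the weighted ℓ² space. -/
def DomW (w : ℕ → ℝ) (T : (ℕ → ℂ) → ℕ → ℂ) : Set (ℕ → ℂ) :=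
  {x | MemL2w w x ∧ MemL2w w (T x)}

/-- `T`, on its maximal domain in weighted ℓ², is self-adjoint:
the graph of the adjoint operator coincides with the graph of `T`. -/
def IsSelfAdjointW (w : ℕ → ℝ) (T : (ℕ → ℂ) → ℕ → ℂ) : Prop :=
  ∀ y z : ℕ → ℂ, MemL2w w y → MemL2w w z →
    ((∀ x ∈ DomW w T, innerW w (T x) y = innerW w x z) ↔ (y ∈ DomW w T ∧ T y = z))

/-- The point spectrum (set of eigenvalues) of `T` on its maximal domain. -/
def eigenW (w : ℕ → ℝ) (T : (ℕ → ℂ) → ℕ → ℂ) : Set ℂ :=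
  {l | ∃ x ∈ DomW w T, x ≠ 0 ∧ T x = fun n => l * x n}

/-- The spectrum of `T`: those `l` for which `T - l` is not a bijection from the maximal
domain onto the weighted ℓ² space (for a closed operator this is the usual spectrum). -/
def spectrumW (w : ℕ → ℝ) (T : (ℕ → ℂ) → ℕ → ℂ) : Set ℂ :=
  {l | ¬ ((∀ x ∈ DomW w T, T x = (fun n => l * x n) → x = 0) ∧
          ∀ y : ℕ → ℂ, MemL2w w y → ∃ x ∈ DomW w T, (fun n => T x n - l * x n) = y)}

/-- The essential spectrum: the set of accumulation points of the spectrum. -/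
def essSpectrumW (w : ℕ → ℝ) (T : (ℕ → ℂ) → ℕ → ℂ) : Set ℂ :=
  {z | AccPt z (𝓟 (spectrumW w T))}

/-! ### Square-summable solutions for a real spectral parameter -/

/-- A sequence that shrinks at most by factors `1 - d n` with `d` summable and is positive arbitrarily
far out is eventually bounded below by a positive constant. -/
lemma eventually_lower_bound (S d : ℕ → ℝ) (N : ℕ) (hd0 : ∀ n, 0 ≤ d n) (hd : Summable d)
    (hS : ∀ n ≥ N, (1 - d n) * S n ≤ S (n + 1)) (hpos : ∀ K, ∃ n ≥ K, 0 < S n) :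
    ∃ c > 0, ∃ M, ∀ n ≥ M, c ≤ S n := by
  have htail := tendsto_sum_nat_add d
  obtain ⟨K, hK⟩ := (htail.eventually
    (gt_mem_nhds (show (0 : ℝ) < 1 / 2 by norm_num))).exists_forall_of_atTop
  obtain ⟨M, hM, hSM⟩ := hpos (max K N)
  have hMK : K ≤ M := le_trans (le_max_left _ _) hM
  have hMN : N ≤ M := le_trans (le_max_right _ _) hM
  have hsumM : Summable fun k => d (k + M) := (summable_nat_add_iff M).2 hd
  have hpart : ∀ m, ∑ k ∈ Finset.range m, d (k + M) ≤ 1 / 2 := fun m =>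
    (hsumM.sum_le_tsum _ (fun _ _ => hd0 _)).trans (hK M hMK).le
  have key : ∀ m, S M * (1 - ∑ k ∈ Finset.range m, d (k + M)) ≤ S (m + M) := by
    intro m
    induction m with
    | zero => simp
    | succ m ih =>
      have h := hS (m + M) (by omega)
      have hdm : d (m + M) ≤ 1 / 2 := by
        refine le_trans ?_ (hpart (m + 1))
        rw [Finset.sum_range_succ]
        have : 0 ≤ ∑ k ∈ Finset.range m, d (k + M) := Finset.sum_nonneg fun _ _ => hd0 _
        linarith
      have hs : 0 ≤ ∑ k ∈ Finset.range m, d (k + M) := Finset.sum_nonneg fun _ _ => hd0 _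
      rw [Finset.sum_range_succ, show m + 1 + M = m + M + 1 by ring]
      have h' := mul_le_mul_of_nonneg_left ih (show 0 ≤ 1 - d (m + M) by linarith)
      have h'' : 0 ≤ S M * (d (m + M) * ∑ k ∈ Finset.range m, d (k + M)) :=
        mul_nonneg hSM.le (mul_nonneg (hd0 _) hs)
      nlinarith
  refine ⟨S M / 2, by positivity, M, fun n hn => ?_⟩
  have h := key (n - M)
  rw [Nat.sub_add_cancel hn] at h
  nlinarith [hpart (n - M)]

/-- The limsup condition on `|b n| / a n` survives a shift of `b` by a constant,
since `a n → ∞`. -/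
lemma exists_ratio_bound (a b : ℕ → ℝ) (ha : ∀ n, 0 < a n) (h1 : Tendsto a atTop atTop)
    (h4 : limsup (fun n => ((|b n| / a n : ℝ) : EReal)) atTop < ((2 : ℝ) : EReal)) (l : ℝ) :
    ∃ r < 2, ∃ N, ∀ n ≥ N, |b n - l| ≤ r * a n := by
  obtain ⟨q, hq1, hq2⟩ := EReal.lt_iff_exists_real_btwn.1 h4
  have hq2' : q < 2 := by exact_mod_cast hq2
  have hev := eventually_lt_of_limsup_lt hq1
  have hl : ∀ᶠ n in atTop, |l| ≤ (2 - q) / 2 * a n := by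
    filter_upwards [h1.eventually_ge_atTop (|l| / ((2 - q) / 2))] with n hn
    rw [div_le_iff₀ (by linarith)] at hn
    linarith
  obtain ⟨N, hN⟩ := (hev.and hl).exists_forall_of_atTop
  refine ⟨q + (2 - q) / 2, by linarith, N, fun n hn => ?_⟩
  obtain ⟨h, h'⟩ := hN n hn
  have h : |b n| / a n < q := by exact_mod_cast h
  rw [div_lt_iff₀ (ha n)] at h
  have := abs_sub (b n) l
  linarith

/-- Real square-summable solutions of the eigenvalue recurrence vanish, by monitoring the
quadratic form `S n = a n ^ 2 (u n ^ 2 + u (n+1) ^ 2) + (b n - l) a n u n u (n+1)`. -/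
lemma real_solution_eq_zero
    (a b : ℕ → ℝ) (ha : ∀ n, 0 < a n)
    (h1 : Tendsto a atTop atTop)
    (h2 : ¬ Summable fun n : ℕ => 1 / a n ^ 2)
    (h3 : Summable fun n : ℕ => max (-((a (n + 1) / a n) ^ 2 - 1)) 0)
    (h4 : limsup (fun n => ((|b n| / a n : ℝ) : EReal)) atTop < ((2 : ℝ) : EReal))
    (h5 : Summable fun n : ℕ => |b (n + 1) - b n| / a n)
    (l : ℝ) (u : ℕ → ℝ)
    (hu : ∀ n, a n * u n + (b (n + 1) - l) * u (n + 1) + a (n + 1) * u (n + 2) = 0)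
    (hsum : Summable fun n => u n ^ 2) : ∀ n, u n = 0 := by
  obtain ⟨r, hr, N, hN⟩ := exists_ratio_bound a b ha h1 h4 l
  have hr0 : 0 ≤ r := by
    have := (abs_nonneg _).trans (hN N le_rfl)
    exact nonneg_of_mul_nonneg_left this (ha N)
  set Q : ℕ → ℝ := fun n => u n ^ 2 + u (n + 1) ^ 2 with hQ
  set S : ℕ → ℝ := fun n => a n ^ 2 * Q n + (b n - l) * a n * (u n * u (n + 1)) with hSdef
  have hQ0 : ∀ n, 0 ≤ Q n := fun n => by simp only [hQ]; positivity
  have huu : ∀ n, |u n * u (n + 1)| ≤ Q n / 2 := fun n => by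
    simp only [hQ]
    rw [abs_le]
    constructor <;> nlinarith [sq_nonneg (u n - u (n + 1)), sq_nonneg (u n + u (n + 1))]
  have hcross : ∀ n ≥ N, |(b n - l) * a n * (u n * u (n + 1))| ≤ r / 2 * (a n ^ 2 * Q n) := by
    intro n hn
    rw [abs_mul, abs_mul, abs_of_pos (ha n)]
    calc |b n - l| * a n * |u n * u (n + 1)|
        ≤ (r * a n) * a n * (Q n / 2) := by
          gcongr
          · exact mul_nonneg (mul_nonneg hr0 (ha n).le) (ha n).le
          · exact (ha n).le
          · exact hN n hn
          · exact huu n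
      _ = _ := by ring
  have hlow : ∀ n ≥ N, (1 - r / 2) * (a n ^ 2 * Q n) ≤ S n := fun n hn => by
    have := (abs_le.1 (hcross n hn)).1
    simp only [hSdef]; linarith
  have hup : ∀ n ≥ N, S n ≤ 2 * (a n ^ 2 * Q n) := fun n hn => by
    have := (abs_le.1 (hcross n hn)).2
    have h' : 0 ≤ a n ^ 2 * Q n := mul_nonneg (sq_nonneg _) (hQ0 n)
    simp only [hSdef]; nlinarith
  have hstep : ∀ n, S (n + 1) - S n =
      (a (n + 1) ^ 2 - a n ^ 2) * u (n + 1) ^ 2 + (b (n + 1) - b n) * a n * (u n * u (n + 1)) := by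
    intro n
    have h := hu n
    have e : a (n + 1) * u (n + 2) = -(a n * u n + (b (n + 1) - l) * u (n + 1)) := by linarith
    simp only [hSdef, hQ]
    have e2 : (a (n + 1) * u (n + 2)) ^ 2 = (a n * u n + (b (n + 1) - l) * u (n + 1)) ^ 2 := by
      rw [e]; ring
    have e3 : (b (n + 1) - l) * u (n + 1) * (a (n + 1) * u (n + 2))
        = (b (n + 1) - l) * u (n + 1) * -(a n * u n + (b (n + 1) - l) * u (n + 1)) := by rw [e]
    linear_combination e2 + e3
  set eps : ℕ → ℝ := fun n =>
    max (-((a (n + 1) / a n) ^ 2 - 1)) 0 + |b (n + 1) - b n| / a n with heps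
  have heps0 : ∀ n, 0 ≤ eps n := fun n =>
    add_nonneg (le_max_right _ _) (div_nonneg (abs_nonneg _) (ha n).le)
  have hdrop : ∀ n, S n - eps n * (a n ^ 2 * Q n) ≤ S (n + 1) := by
    intro n
    have hs := hstep n
    have A : -(max (-((a (n + 1) / a n) ^ 2 - 1)) 0 * (a n ^ 2 * Q n))
        ≤ (a (n + 1) ^ 2 - a n ^ 2) * u (n + 1) ^ 2 := by
      set m := max (-((a (n + 1) / a n) ^ 2 - 1)) 0
      have hm : -((a (n + 1) / a n) ^ 2 - 1) ≤ m := le_max_left _ _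
      have hm0 : 0 ≤ m := le_max_right _ _
      have e : a (n + 1) ^ 2 - a n ^ 2 = ((a (n + 1) / a n) ^ 2 - 1) * a n ^ 2 := by
        have := (ha n).ne'
        field_simp
      have hp : 0 ≤ a n ^ 2 * u (n + 1) ^ 2 := by positivity
      have hq : a n ^ 2 * u (n + 1) ^ 2 ≤ a n ^ 2 * Q n := by
        simp only [hQ]; gcongr; nlinarith [sq_nonneg (u n)]
      rw [e]
      nlinarith [mul_le_mul_of_nonneg_right hm hp, mul_le_mul_of_nonneg_left hq hm0]
    have B : |(b (n + 1) - b n) * a n * (u n * u (n + 1))|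
        ≤ |b (n + 1) - b n| / a n * (a n ^ 2 * Q n) := by
      rw [abs_mul, abs_mul, abs_of_pos (ha n)]
      have e : |b (n + 1) - b n| / a n * (a n ^ 2 * Q n) = |b (n + 1) - b n| * a n * Q n := by
        have := (ha n).ne'
        field_simp
      rw [e]
      have := ha n
      gcongr
      linarith [huu n, hQ0 n]
    have B' := (abs_le.1 B).1
    simp only [heps, add_mul]
    linarith
  have hc : 0 < 1 - r / 2 := by linarith
  have hfin : ¬ ∀ K, ∃ n ≥ K, 0 < S n := by
    intro hpos
    obtain ⟨c, hc0, M, hM⟩ := eventually_lower_bound S (fun n => eps n / (1 - r / 2)) N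
      (fun n => div_nonneg (heps0 n) hc.le) ((h3.add h5).div_const _) (fun n hn => by
        have h := hdrop n
        have h' : eps n * (a n ^ 2 * Q n) ≤ eps n / (1 - r / 2) * S n := by
          calc eps n * (a n ^ 2 * Q n)
              = eps n / (1 - r / 2) * ((1 - r / 2) * (a n ^ 2 * Q n)) := by
                rw [← mul_assoc (eps n / _), div_mul_cancel₀ _ hc.ne']
            _ ≤ _ := mul_le_mul_of_nonneg_left (hlow n hn) (div_nonneg (heps0 n) hc.le)
        linarith) hpos
    apply h2
    have hQs : Summable Q := hsum.add ((summable_nat_add_iff 1).2 hsum)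
    refine Summable.of_norm_bounded_eventually_nat (hQs.mul_left (2 / c)) ?_
    filter_upwards [eventually_ge_atTop (max M N)] with n hn
    have h := (hM n (le_trans (le_max_left _ _) hn)).trans (hup n (le_trans (le_max_right _ _) hn))
    have han : 0 < a n ^ 2 := pow_pos (ha n) 2
    rw [Real.norm_of_nonneg (by positivity), div_le_iff₀ han]
    rw [show 2 / c * Q n * a n ^ 2 = (2 * (a n ^ 2 * Q n)) / c by ring, le_div_iff₀ hc0]
    linarith
  push Not at hfin
  obtain ⟨K, hK⟩ := hfin
  have hzero : ∀ n ≥ max K N, u n = 0 := by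
    intro n hn
    have h := (hlow n (le_trans (le_max_right _ _) hn)).trans (hK n (le_trans (le_max_left _ _) hn))
    have h' : 0 < (1 - r / 2) * a n ^ 2 := mul_pos hc (pow_pos (ha n) 2)
    have h'' : Q n ≤ 0 := by
      by_contra hcon
      push Not at hcon
      nlinarith [mul_pos h' hcon]
    simp only [hQ] at h''
    nlinarith [sq_nonneg (u n), sq_nonneg (u (n + 1))]
  -- The recurrence can be run backwards because `a n ≠ 0`.
  have hback : ∀ m n, max K N ≤ n + m → u n = 0 := by
    intro m
    induction m with
    | zero => exact fun n hn => hzero n hn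
    | succ m ih =>
      intro n hn
      have e1 := ih (n + 1) (by omega)
      have e2 := ih (n + 2) (by omega)
      have h := hu n
      rw [e1, e2] at h
      have : a n * u n = 0 := by linarith
      exact (mul_eq_zero.1 this).resolve_left (ha n).ne'
  exact fun n => hback (max K N) n (by omega)

lemma memL2w_iff (f : ℕ → ℂ) : MemL2w (fun _ => 1) f ↔ Summable fun n => ‖f n‖ ^ 2 := by
  simp [MemL2w]

/-- A square-summable sequence satisfying the eigenvalue equation for a real `l` at all indices
`≥ 1` vanishes; the equation at index `0` is not required. -/
lemma solution_eq_zero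
    (a b : ℕ → ℝ) (ha : ∀ n, 0 < a n)
    (h1 : Tendsto a atTop atTop)
    (h2 : ¬ Summable fun n : ℕ => 1 / a n ^ 2)
    (h3 : Summable fun n : ℕ => max (-((a (n + 1) / a n) ^ 2 - 1)) 0)
    (h4 : limsup (fun n => ((|b n| / a n : ℝ) : EReal)) atTop < ((2 : ℝ) : EReal))
    (h5 : Summable fun n : ℕ => |b (n + 1) - b n| / a n)
    (l : ℝ) (x : ℕ → ℂ) (hx : MemL2w (fun _ => 1) x)
    (he : ∀ n, jacobiAct a b x (n + 1) = l * x (n + 1)) : x = 0 := by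
  rw [memL2w_iff] at hx
  have hre : ∀ n, (x n).re = 0 :=
    real_solution_eq_zero a b ha h1 h2 h3 h4 h5 l (fun n => (x n).re)
      (fun n => by
        have h := congrArg Complex.re (he n)
        simp [jacobiAct] at h
        linarith)
      (Summable.of_nonneg_of_le (fun _ => sq_nonneg _) (fun n => by
        rw [← sq_abs]; gcongr; exact Complex.abs_re_le_norm _) hx)
  have him : ∀ n, (x n).im = 0 :=
    real_solution_eq_zero a b ha h1 h2 h3 h4 h5 l (fun n => (x n).im)
      (fun n => by
        have h := congrArg Complex.im (he n)
        simp [jacobiAct] at h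
        linarith)
      (Summable.of_nonneg_of_le (fun _ => sq_nonneg _) (fun n => by
        rw [← sq_abs]; gcongr; exact Complex.abs_im_le_norm _) hx)
  funext n
  exact Complex.ext (hre n) (him n)

/-! ### Symmetry from Carleman's condition -/

/-- Discrete Green's formula. -/
lemma green (a b : ℕ → ℝ) (x y : ℕ → ℂ) (n : ℕ) :
    ∑ k ∈ Finset.range (n + 1),
      (star (jacobiAct a b x k) * y k - star (x k) * jacobiAct a b y k) =
    a n * (star (x (n + 1)) * y n - star (x n) * y (n + 1)) := by
  induction n with
  | zero => simp [jacobiAct]; ring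
  | succ n ih =>
    rw [Finset.sum_range_succ, ih]
    simp [jacobiAct]; ring

lemma summable_star_mul (x y : ℕ → ℂ) (hx : MemL2w (fun _ => 1) x) (hy : MemL2w (fun _ => 1) y) :
    Summable fun n => star (x n) * y n := by
  rw [memL2w_iff] at hx hy
  refine Summable.of_norm_bounded (hx.add hy) fun n => ?_
  rw [norm_mul, norm_star]
  nlinarith [sq_nonneg (‖x n‖ - ‖y n‖), norm_nonneg (x n), norm_nonneg (y n)]

lemma innerW_one (x y : ℕ → ℂ) : innerW (fun _ => 1) x y = ∑' n, star (x n) * y n := by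
  simp [innerW]

/-- A nonzero limit of the Wronskian in Green's formula would make `1 / a n`, and hence
`1 / a n ^ 2`, summable. -/
lemma jacobi_symm (a b : ℕ → ℝ) (ha : ∀ n, 0 < a n)
    (h1 : Tendsto a atTop atTop)
    (h2 : ¬ Summable fun n : ℕ => 1 / a n ^ 2) (x y : ℕ → ℂ)
    (hx : x ∈ DomW (fun _ => 1) (jacobiAct a b)) (hy : y ∈ DomW (fun _ => 1) (jacobiAct a b)) :
    innerW (fun _ => 1) (jacobiAct a b x) y = innerW (fun _ => 1) x (jacobiAct a b y) := by
  rw [innerW_one, innerW_one]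
  have s1 := summable_star_mul _ _ hx.2 hy.1
  have s2 := summable_star_mul _ _ hx.1 hy.2
  rw [← sub_eq_zero, ← s1.tsum_sub s2]
  set c := ∑' n, (star (jacobiAct a b x n) * y n - star (x n) * jacobiAct a b y n) with hc
  have hlim := ((s1.sub s2).hasSum.tendsto_sum_nat.comp (tendsto_add_atTop_nat 1)).norm
  rw [← hc] at hlim
  by_contra hne
  have hpos : 0 < ‖c‖ := norm_pos_iff.2 hne
  have hev := hlim.eventually (lt_mem_nhds (show ‖c‖ / 2 < ‖c‖ by linarith))
  apply h2
  have sx := (memL2w_iff x).1 hx.1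
  have sy := (memL2w_iff y).1 hy.1
  have sG := ((sx.add ((summable_nat_add_iff 1).2 sx)).add
    (sy.add ((summable_nat_add_iff 1).2 sy))).mul_left (2 / ‖c‖)
  refine Summable.of_norm_bounded_eventually_nat sG ?_
  filter_upwards [hev, h1.eventually_ge_atTop 1] with n hn han
  have hG := green a b x y n
  simp only [Function.comp] at hn
  rw [hG, norm_mul, Complex.norm_real, Real.norm_of_nonneg (ha n).le] at hn
  have hW : ‖star (x (n + 1)) * y n - star (x n) * y (n + 1)‖ ≤
      ‖x n‖ ^ 2 + ‖x (n + 1)‖ ^ 2 + (‖y n‖ ^ 2 + ‖y (n + 1)‖ ^ 2) := by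
    refine (norm_sub_le _ _).trans ?_
    rw [norm_mul, norm_mul, norm_star, norm_star]
    nlinarith [sq_nonneg (‖x (n + 1)‖ - ‖y n‖), sq_nonneg (‖x n‖ - ‖y (n + 1)‖),
      sq_nonneg (‖x (n + 1)‖), sq_nonneg (‖x n‖), sq_nonneg (‖y (n + 1)‖), sq_nonneg (‖y n‖)]
  set G := ‖x n‖ ^ 2 + ‖x (n + 1)‖ ^ 2 + (‖y n‖ ^ 2 + ‖y (n + 1)‖ ^ 2) with hGdef
  have hG0 : 0 ≤ G := by positivity
  have h' : ‖c‖ / 2 ≤ a n * G := hn.le.trans (mul_le_mul_of_nonneg_left hW (ha n).le)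
  have hle : a n * G ≤ a n ^ 2 * G := by
    have : a n ≤ a n ^ 2 := by nlinarith
    gcongr
  have han2 : 0 < a n ^ 2 := pow_pos (ha n) 2
  rw [Real.norm_of_nonneg (by positivity), div_le_iff₀ han2,
    show 2 / ‖c‖ * G * a n ^ 2 = 2 * (a n ^ 2 * G) / ‖c‖ by ring, le_div_iff₀ hpos]
  linarith

/-! ### Testing against unit vectors -/

lemma jacobiAct_single_of_le (a b : ℕ → ℝ) (n k : ℕ) (hk : n + 2 ≤ k) :
    jacobiAct a b (Pi.single n 1) k = 0 := by
  obtain ⟨k, rfl⟩ : ∃ m, k = m + 1 := ⟨k - 1, by omega⟩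
  have e1 : k ≠ n := by omega
  have e2 : k + 1 ≠ n := by omega
  have e3 : k + 2 ≠ n := by omega
  simp [jacobiAct, e1, e2, e3]

lemma memL2w_of_eventually_zero (f : ℕ → ℂ) (N : ℕ) (hf : ∀ k ≥ N, f k = 0) :
    MemL2w (fun _ => 1) f := by
  rw [memL2w_iff]
  refine summable_of_ne_finset_zero (s := Finset.range N) fun k hk => ?_
  rw [hf k (by simpa using hk)]
  simp

lemma single_mem_dom (a b : ℕ → ℝ) (n : ℕ) :
    (Pi.single n 1 : ℕ → ℂ) ∈ DomW (fun _ => 1) (jacobiAct a b) := by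
  refine ⟨memL2w_of_eventually_zero _ (n + 1) fun k hk => ?_,
    memL2w_of_eventually_zero _ (n + 2) fun k hk => jacobiAct_single_of_le a b n k hk⟩
  have : k ≠ n := by omega
  simp [this]

lemma innerW_single (n : ℕ) (z : ℕ → ℂ) : innerW (fun _ => 1) (Pi.single n 1) z = z n := by
  rw [innerW_one, tsum_eq_single n]
  · simp
  · intro k hk
    simp [hk]

/-- Valid for arbitrary `y`, since the sums involved are finite. -/
lemma innerW_act_single (a b : ℕ → ℝ) (n : ℕ) (y : ℕ → ℂ) :
    innerW (fun _ => 1) (jacobiAct a b (Pi.single n 1)) y = jacobiAct a b y n := by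
  rw [innerW_one, tsum_eq_sum (s := Finset.range (n + 2))]
  · have h := green a b (Pi.single n 1) y (n + 1)
    rw [Finset.sum_sub_distrib, sub_eq_iff_eq_add] at h
    rw [h, Finset.sum_eq_single n]
    · have hne : n + 1 + 1 ≠ n := by omega
      simp [hne]
    · intro k _ hk
      simp [hk]
    · simp
  · intro k hk
    rw [jacobiAct_single_of_le a b n k (by simpa using hk)]
    simp

/-! ### Surjectivity of `C - l` for nonreal `l` -/

lemma jacobiAct_add_smul (a b : ℕ → ℝ) (c : ℂ) (x y : ℕ → ℂ) (n : ℕ) :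
    jacobiAct a b (fun k => x k + c * y k) n = jacobiAct a b x n + c * jacobiAct a b y n := by
  cases n <;> simp only [jacobiAct] <;> ring

/-- Square-summable sequences as a Hilbert space. -/
abbrev HilbertSeq := lp (fun _ : ℕ => ℂ) 2

lemma memL2w_iff_memlp (f : ℕ → ℂ) : MemL2w (fun _ => 1) f ↔ Memℓp f 2 := by
  rw [memL2w_iff, memℓp_gen_iff (by norm_num)]
  simp

lemma memL2w_coe (f : HilbertSeq) : MemL2w (fun _ => 1) (f : ℕ → ℂ) :=
  (memL2w_iff_memlp _).2 (lp.memℓp f)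

lemma innerW_coe (f g : HilbertSeq) : innerW (fun _ => 1) f g = inner ℂ f g := by
  rw [innerW_one, lp.inner_eq_tsum]
  exact tsum_congr fun n => by simp [mul_comm]

/-- The range of `C - l` on the maximal domain, as a subspace of `ℓ²`. -/
def rangeSub (a b : ℕ → ℝ) (l : ℂ) : Submodule ℂ HilbertSeq where
  carrier := {y | ∃ x : HilbertSeq, ∀ n, jacobiAct a b x n - l * x n = y n}
  zero_mem' := ⟨0, fun n => by cases n <;> simp [jacobiAct]⟩
  add_mem' := by
    rintro y y' ⟨x, hx⟩ ⟨x', hx'⟩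
    refine ⟨x + x', fun n => ?_⟩
    have h := jacobiAct_add_smul a b 1 x x' n
    simp only [one_mul] at h
    have e : ((x + x' : HilbertSeq) : ℕ → ℂ) = fun k => x k + x' k := rfl
    have e' : (y + y' : HilbertSeq) n = y n + y' n := rfl
    rw [e, e', h, ← hx n, ← hx' n]
    ring
  smul_mem' := by
    rintro c y ⟨x, hx⟩
    refine ⟨c • x, fun n => ?_⟩
    have h := jacobiAct_add_smul a b c 0 x n
    have h0 : jacobiAct a b 0 n = 0 := by cases n <;> simp [jacobiAct]
    simp only [Pi.zero_apply, zero_add, h0] at h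
    have e : ((c • x : HilbertSeq) : ℕ → ℂ) = fun k => c * x k := rfl
    have e' : (c • y : HilbertSeq) n = c * y n := rfl
    rw [e, e', h, ← hx n]
    ring

lemma mem_dom_of_eq (a b : ℕ → ℝ) (l : ℂ) (x y : HilbertSeq)
    (h : ∀ n, jacobiAct a b x n - l * x n = y n) :
    (x : ℕ → ℂ) ∈ DomW (fun _ => 1) (jacobiAct a b) ∧
      jacobiAct a b x = ((y + l • x : HilbertSeq) : ℕ → ℂ) := by
  have e : jacobiAct a b x = ((y + l • x : HilbertSeq) : ℕ → ℂ) := by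
    funext n
    have e' : (y + l • x : HilbertSeq) n = y n + l * x n := rfl
    rw [e', ← h n]; ring
  refine ⟨⟨memL2w_coe x, ?_⟩, e⟩
  rw [e]
  exact memL2w_coe _

/-- For a symmetric operator, `|Im l| ‖x‖ ≤ ‖(C - l) x‖`. -/
lemma norm_bound (a b : ℕ → ℝ)
    (hsymm : ∀ x y, x ∈ DomW (fun _ => 1) (jacobiAct a b) →
      y ∈ DomW (fun _ => 1) (jacobiAct a b) →
      innerW (fun _ => 1) (jacobiAct a b x) y = innerW (fun _ => 1) x (jacobiAct a b y))
    (l : ℂ) (x y : HilbertSeq)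
    (h : ∀ n, jacobiAct a b x n - l * x n = y n) : |l.im| * ‖x‖ ≤ ‖y‖ := by
  obtain ⟨hd, e⟩ := mem_dom_of_eq a b l x y h
  have hs := hsymm x x hd hd
  rw [e, innerW_coe, innerW_coe, inner_add_left, inner_add_right, inner_smul_left,
    inner_smul_right, ← inner_conj_symm y x] at hs
  have him := congrArg Complex.im hs
  have hxx : inner ℂ x x = ((‖x‖ ^ 2 : ℝ) : ℂ) := by
    rw [inner_self_eq_norm_sq_to_K]; norm_cast
  rw [hxx] at him
  simp only [Complex.add_im, Complex.mul_im, Complex.conj_im, Complex.conj_re, Complex.ofReal_im,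
    Complex.ofReal_re] at him
  have hb : |(inner ℂ x y : ℂ).im| ≤ ‖x‖ * ‖y‖ :=
    (Complex.abs_im_le_norm _).trans (norm_inner_le_norm _ _)
  have hk : |l.im| * ‖x‖ ^ 2 = |(inner ℂ x y : ℂ).im| := by
    rw [← abs_of_nonneg (sq_nonneg ‖x‖), ← abs_mul, abs_eq_abs]
    right; linarith
  rcases (norm_nonneg x).eq_or_lt with h0 | h0
  · rw [← h0]; simp
  · have : |l.im| * ‖x‖ * ‖x‖ ≤ ‖y‖ * ‖x‖ := by nlinarith
    exact le_of_mul_le_mul_right this h0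

lemma tendsto_coord (x : ℕ → HilbertSeq) (x₀ : HilbertSeq) (h : Tendsto x atTop (𝓝 x₀)) (n : ℕ) :
    Tendsto (fun k => x k n) atTop (𝓝 (x₀ n)) := by
  rw [tendsto_iff_norm_sub_tendsto_zero] at h ⊢
  exact squeeze_zero (fun _ => norm_nonneg _)
    (fun k => lp.norm_apply_le_norm (by norm_num) (x k - x₀) n) h

/-- The range is dense because its orthogonal complement lies in the kernel of `C - l̄`, and
closed by `norm_bound`. -/
lemma surj_of_nonreal (a b : ℕ → ℝ)
    (hsymm : ∀ x y, x ∈ DomW (fun _ => 1) (jacobiAct a b) →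
      y ∈ DomW (fun _ => 1) (jacobiAct a b) →
      innerW (fun _ => 1) (jacobiAct a b x) y = innerW (fun _ => 1) x (jacobiAct a b y))
    (l : ℂ) (hl : l.im ≠ 0) : rangeSub a b l = ⊤ := by
  have hl' : 0 < |l.im| := abs_pos.2 hl
  have hdense : (rangeSub a b l).topologicalClosure = ⊤ := by
    rw [Submodule.topologicalClosure_eq_top_iff, Submodule.eq_bot_iff]
    intro y hy
    rw [Submodule.mem_orthogonal] at hy
    have heq : ∀ n, jacobiAct a b y n - star l * y n = (0 : HilbertSeq) n := by
      intro n
      have hd := single_mem_dom a b n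
      set e : HilbertSeq := ⟨Pi.single n 1, (memL2w_iff_memlp _).1 hd.1⟩ with he
      set f : HilbertSeq := ⟨jacobiAct a b (Pi.single n 1), (memL2w_iff_memlp _).1 hd.2⟩ with hf
      have h := hy (f - l • e) ⟨e, fun k => rfl⟩
      rw [inner_sub_left, inner_smul_left, ← innerW_coe, ← innerW_coe] at h
      have h1 : innerW (fun _ => 1) f y = jacobiAct a b y n := innerW_act_single a b n y
      have h2 : innerW (fun _ => 1) e y = y n := innerW_single n y
      rw [h1, h2] at h
      exact h
    have hb := norm_bound a b hsymm (star l) y 0 heq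
    have him : |(star l).im| = |l.im| := by simp
    rw [him, norm_zero] at hb
    exact norm_le_zero_iff.1 (by nlinarith [norm_nonneg y])
  rw [Submodule.eq_top_iff']
  intro y
  have hy : y ∈ closure (rangeSub a b l : Set HilbertSeq) := by
    rw [← Submodule.topologicalClosure_coe, hdense]; trivial
  obtain ⟨v, hv, hlim⟩ := mem_closure_iff_seq_limit.1 hy
  choose x hx using hv
  have hcau : CauchySeq x := by
    rw [Metric.cauchySeq_iff]
    intro ε hε
    obtain ⟨N, hN⟩ := Metric.cauchySeq_iff.1 hlim.cauchySeq (|l.im| * ε) (by positivity)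
    refine ⟨N, fun m hm n hn => ?_⟩
    have h := hN m hm n hn
    rw [dist_eq_norm] at h ⊢
    have hb := norm_bound a b hsymm l (x m - x n) (v m - v n) (fun k => by
      have h := jacobiAct_add_smul a b (-1) (x m) (x n) k
      have e : ((x m - x n : HilbertSeq) : ℕ → ℂ) = fun k => x m k + (-1) * x n k := by
        funext k
        have : (x m - x n : HilbertSeq) k = x m k - x n k := rfl
        rw [this]; ring
      have e' : (v m - v n : HilbertSeq) k = v m k - v n k := rfl
      rw [e, e', h, ← hx m k, ← hx n k]
      ring)
    exact lt_of_mul_lt_mul_left (hb.trans_lt h) hl'.le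
  obtain ⟨x₀, hx₀⟩ := cauchySeq_tendsto_of_complete hcau
  refine ⟨x₀, fun n => ?_⟩
  have c := tendsto_coord x x₀ hx₀
  have hact : Tendsto (fun k => jacobiAct a b (x k) n) atTop (𝓝 (jacobiAct a b x₀ n)) := by
    cases n with
    | zero => exact ((c 0).const_mul _).add ((c 1).const_mul _)
    | succ n =>
      exact (((c n).const_mul _).add ((c (n + 1)).const_mul _)).add ((c (n + 2)).const_mul _)
  refine tendsto_nhds_unique (hact.sub ((c n).const_mul l)) ?_
  simp only [hx]
  exact tendsto_coord v y hlim n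

/-- Corollary B / Theorem 4.2: under conditions (a)–(e) the Jacobi matrix is
self-adjoint, has no eigenvalues, and its spectrum is all of ℝ. -/
theorem jacobi_selfAdjoint_no_eigen_spectrum_real_sq
    (a b : ℕ → ℝ) (ha : ∀ n, 0 < a n)
    (h1 : Tendsto a atTop atTop)
    (h2 : ¬ Summable fun n : ℕ => 1 / a n ^ 2)
    (h3 : Summable fun n : ℕ => max (-((a (n + 1) / a n) ^ 2 - 1)) 0)
    (h4 : limsup (fun n => ((|b n| / a n : ℝ) : EReal)) atTop < ((2 : ℝ) : EReal))
    (h5 : Summable fun n : ℕ => |b (n + 1) - b n| / a n) :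
    IsSelfAdjointW (fun _ => 1) (jacobiAct a b) ∧
    eigenW (fun _ => 1) (jacobiAct a b) = ∅ ∧
    spectrumW (fun _ => 1) (jacobiAct a b) = Set.range ((↑) : ℝ → ℂ) := by
  have hsymm := jacobi_symm a b ha h1 h2
  have hinj : ∀ l : ℂ, ∀ x ∈ DomW (fun _ => 1) (jacobiAct a b),
      jacobiAct a b x = (fun n => l * x n) → x = 0 := by
    intro l x hx he
    by_cases hl : l.im = 0
    · refine solution_eq_zero a b ha h1 h2 h3 h4 h5 l.re x hx.1 fun n => ?_
      have : (l.re : ℂ) = l := Complex.ext rfl (by simp [hl])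
      rw [he, this]
    · set X : HilbertSeq := ⟨x, (memL2w_iff_memlp _).1 hx.1⟩ with hX
      have hb := norm_bound a b hsymm l X 0 (fun n => by
        change jacobiAct a b x n - l * x n = 0
        rw [he]; ring)
      have hl' : 0 < |l.im| := abs_pos.2 hl
      rw [norm_zero] at hb
      have h0 : X = 0 := norm_le_zero_iff.1 (by nlinarith [norm_nonneg X])
      exact congrArg (fun z : HilbertSeq => (z : ℕ → ℂ)) h0
  refine ⟨?_, ?_, ?_⟩
  · intro y z hy hz
    constructor
    · intro h
      have e : jacobiAct a b y = z := by
        funext n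
        rw [← innerW_act_single a b n y, h _ (single_mem_dom a b n), innerW_single]
      exact ⟨⟨hy, by rw [e]; exact hz⟩, e⟩
    · rintro ⟨hd, rfl⟩ x hx
      exact hsymm x y hx hd
  · rw [Set.eq_empty_iff_forall_notMem]
    rintro l ⟨x, hx, hne, he⟩
    exact hne (hinj l x hx he)
  · ext l
    constructor
    · intro hl
      by_contra hr
      have him : l.im ≠ 0 := fun h => hr ⟨l.re, Complex.ext rfl (by simp [h])⟩
      refine hl ⟨hinj l, fun y hy => ?_⟩
      have hmem : (⟨y, (memL2w_iff_memlp _).1 hy⟩ : HilbertSeq) ∈ rangeSub a b l := by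
        rw [surj_of_nonreal a b hsymm l him]; trivial
      obtain ⟨x, hx⟩ := hmem
      exact ⟨x, (mem_dom_of_eq a b l x _ hx).1, funext hx⟩
    · rintro ⟨l, rfl⟩ ⟨-, hsurj⟩
      -- A preimage of `δ₀` solves the recurrence from index `1` on, hence vanishes.
      obtain ⟨x, hx, he⟩ := hsurj (Pi.single 0 1) (single_mem_dom a b 0).1
      have hx0 : x = 0 := solution_eq_zero a b ha h1 h2 h3 h4 h5 l x hx.1 fun n => by
        have h := congrFun he (n + 1)
        simp only [Pi.single_apply, Nat.add_eq_zero_iff, one_ne_zero, and_false, if_false] at h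
        exact sub_eq_zero.1 h
      have h := congrFun he 0
      simp [hx0, jacobiAct] at h
end
end

section
/- Let C be a self-adjoint Jacobi matrix with weights {a_n} and diagonal b_n ≡ 0. Let C_e and C_o be the restrictions of the composition C∘C to the closed linear spans of {δ_{2k} : k ∈ ℕ} and {δ_{2k+1} : k ∈ ℕ}, respectively (δ_m the standard basis vector of ℓ²). Then C_e is unitarily equivalent to the Jacobi matrix with entries a_n^e = a_{2n} a_{2n+1}, b_n^e = a_{2n−1}² + a_{2n}² (with a_{−1} = 0), and C_o to the Jacobi matrix with entries a_n^o = a_{2n+1} a_{2n+2}, b_n^o = a_{2n}² + a_{2n+1}². Moreover, if 0 ∉ σ_p(C) and 0 ∉ σ_p(C̃), where C̃ is the self-adjoint Jacobi matrix with weights {a_{n+1}}_{n≥0} and zero diagonal, then C_o and C_e are self-adjoint and σ(C_o) = σ(C_e) = (σ(C))² and σ_p(C_o) = σ_p(C_e) = (σ_p(C))², where X² = {x² : x ∈ X}. -/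
/-!
Relative to the splitting of a sequence into its even and odd parts, the zero-diagonal Jacobi
matrix `C` is the block operator `(u, v) ↦ (B' v, B u)` (`jacobiAct_merge`), so the two Jacobi
matrices of the statement are `B' B` and `B B'`; this is the first half of the claim.

The analytic point is that the maximal domain of `B' B` is no larger than the even part of
`Dom (C²)`. Von Neumann's graph argument shows that `C² + 1` maps `Dom (C²)` onto ℓ²
(`exists_sq_add_self`), so it suffices that `B' B u = -u` has no nonzero solution `u ∈ ℓ²`. After
removing alternating signs such a solution dominates the formal null vector of `B`, which is not in
ℓ² because `0` is not an eigenvalue of `C` (`eq_zero_of_even`). For `B B'` the comparison is with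
the null vector of the shifted matrix `C̃` (`eq_zero_of_odd`).

The rest is algebra with the pair `(B, B')`, collected in `IsFactorPair`. Self-adjointness of `B' B`
follows from symmetry and surjectivity of `B' B + 1`. For the spectra, `C - l` is a bijection if
and only if `B' B - l²` is (`seqRegular_sq`, `blockRegular_of_sq`), and eigenvectors correspond via
`x ↦ (l x, B x)`. Everything is symmetric in `B` and `B'`.
-/

open Filter Topology

noncomputable section

/-- The isometry of ℓ² onto the closed linear span of the even coordinate vectors. -/
def evenEmbed (x : ℕ → ℂ) : ℕ → ℂ := fun n => if n % 2 = 0 then x (n / 2) else 0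

/-- The isometry of ℓ² onto the closed linear span of the odd coordinate vectors. -/
def oddEmbed (x : ℕ → ℂ) : ℕ → ℂ := fun n => if n % 2 = 1 then x (n / 2) else 0

/-! ### Square-summable sequences -/

/-- The space ℓ² as a submodule of the space of all complex sequences. -/
def ell2 : Submodule ℂ (ℕ → ℂ) where
  carrier := {x | MemL2w (fun _ => 1) x}
  zero_mem' := by simp [MemL2w]
  add_mem' := by
    intro x y hx hy
    have hx' : Summable fun n => ‖x n‖ ^ 2 := by simpa [MemL2w] using hx
    have hy' : Summable fun n => ‖y n‖ ^ 2 := by simpa [MemL2w] using hy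
    have hb := (hx'.mul_left 2).add (hy'.mul_left 2)
    have : Summable fun n => ‖x n + y n‖ ^ 2 := by
      refine Summable.of_nonneg_of_le (fun n => by positivity) (fun n => ?_) hb
      have := norm_add_le (x n) (y n)
      nlinarith [sq_nonneg (‖x n‖ - ‖y n‖), norm_nonneg (x n + y n), norm_nonneg (x n),
        norm_nonneg (y n)]
    simpa [MemL2w] using this
  smul_mem' := by
    intro c x hx
    have hx' : Summable fun n => ‖x n‖ ^ 2 := by simpa [MemL2w] using hx
    simpa [MemL2w, mul_pow] using hx'.mul_left (‖c‖ ^ 2)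

lemma memL2w_iff_s6 {x : ℕ → ℂ} : MemL2w (fun _ => 1) x ↔ x ∈ ell2 := Iff.rfl

lemma mem_ell2_iff {x : ℕ → ℂ} : x ∈ ell2 ↔ Summable fun n => ‖x n‖ ^ 2 := by
  simp [← memL2w_iff_s6, MemL2w]

lemma summable_inner {x y : ℕ → ℂ} (hx : x ∈ ell2) (hy : y ∈ ell2) :
    Summable fun n => star (x n) * y n := by
  rw [mem_ell2_iff] at hx hy
  refine Summable.of_norm_bounded (hx.add hy) (fun n => ?_)
  rw [norm_mul, norm_star]
  nlinarith [sq_nonneg (‖x n‖ - ‖y n‖), sq_nonneg (‖x n‖), sq_nonneg (‖y n‖)]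

lemma innerW_add_left {x x' y : ℕ → ℂ} (hx : x ∈ ell2) (hx' : x' ∈ ell2) (hy : y ∈ ell2) :
    innerW (fun _ => 1) (x + x') y = innerW (fun _ => 1) x y + innerW (fun _ => 1) x' y := by
  simp only [innerW_one]
  rw [← (summable_inner hx hy).tsum_add (summable_inner hx' hy)]
  simp [add_mul]

lemma innerW_add_right {x y y' : ℕ → ℂ} (hx : x ∈ ell2) (hy : y ∈ ell2) (hy' : y' ∈ ell2) :
    innerW (fun _ => 1) x (y + y') = innerW (fun _ => 1) x y + innerW (fun _ => 1) x y' := by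
  simp only [innerW_one]
  rw [← (summable_inner hx hy).tsum_add (summable_inner hx hy')]
  simp [mul_add]

lemma innerW_sub_right {x y y' : ℕ → ℂ} (hx : x ∈ ell2) (hy : y ∈ ell2) (hy' : y' ∈ ell2) :
    innerW (fun _ => 1) x (y - y') = innerW (fun _ => 1) x y - innerW (fun _ => 1) x y' := by
  simp only [innerW_one]
  rw [← (summable_inner hx hy).tsum_sub (summable_inner hx hy')]
  simp [mul_sub]

lemma eq_zero_of_innerW_self {x : ℕ → ℂ} (hx : x ∈ ell2) (h : innerW (fun _ => 1) x x = 0) :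
    x = 0 := by
  have hs := mem_ell2_iff.1 hx
  have h1 : innerW (fun _ => 1) x x = ((∑' n, ‖x n‖ ^ 2 : ℝ) : ℂ) := by
    rw [innerW_one, Complex.ofReal_tsum]
    refine tsum_congr fun n => ?_
    rw [Complex.star_def, Complex.conj_mul']
    push_cast
    rfl
  rw [h1, Complex.ofReal_eq_zero] at h
  have h2 := (hasSum_zero_iff_of_nonneg (fun n => by positivity)).1 (h ▸ hs.hasSum)
  funext n
  simpa using congrFun h2 n

/-! ### Factored operators -/

/-- Two formal operators `B`, `B'` on sequences such that the block operator
`(u, v) ↦ (B' v, B u)` on ℓ² ⊕ ℓ² behaves like an injective self-adjoint operator, and such that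
the maximal domains of `B' B` and `B B'` are contained in those of `B` and `B'`. -/
structure IsFactorPair (B B' : (ℕ → ℂ) →ₗ[ℂ] (ℕ → ℂ)) : Prop where
  symm : ∀ u v, u ∈ ell2 → v ∈ ell2 → B u ∈ ell2 → B' v ∈ ell2 →
    innerW (fun _ => 1) (B u) v = innerW (fun _ => 1) u (B' v)
  symm' : ∀ u v, u ∈ ell2 → v ∈ ell2 → B u ∈ ell2 → B' v ∈ ell2 →
    innerW (fun _ => 1) (B' v) u = innerW (fun _ => 1) v (B u)
  surj : ∀ y ∈ ell2, ∃ x ∈ ell2, B x ∈ ell2 ∧ B' (B x) + x = y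
  surj' : ∀ y ∈ ell2, ∃ x ∈ ell2, B' x ∈ ell2 ∧ B (B' x) + x = y
  dom : ∀ x ∈ ell2, B' (B x) ∈ ell2 → B x ∈ ell2
  dom' : ∀ x ∈ ell2, B (B' x) ∈ ell2 → B' x ∈ ell2
  inj : ∀ x ∈ ell2, B x = 0 → x = 0
  inj' : ∀ x ∈ ell2, B' x = 0 → x = 0

lemma IsFactorPair.swap {B B' : (ℕ → ℂ) →ₗ[ℂ] (ℕ → ℂ)} (h : IsFactorPair B B') :
    IsFactorPair B' B :=
  ⟨fun u v hu hv hBu hBv => h.symm' v u hv hu hBv hBu,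
    fun u v hu hv hBu hBv => h.symm v u hv hu hBv hBu,
    h.surj', h.surj, h.dom', h.dom, h.inj', h.inj⟩

/-- `l` is a regular point of the block operator `(u, v) ↦ (B' v, B u)`. Membership of `B u` and
`B' v` in ℓ² follows from the equations. -/
def BlockRegular (B B' : (ℕ → ℂ) →ₗ[ℂ] (ℕ → ℂ)) (l : ℂ) : Prop :=
  (∀ u v, u ∈ ell2 → v ∈ ell2 → B' v = l • u → B u = l • v → u = 0 ∧ v = 0) ∧
  ∀ p q, p ∈ ell2 → q ∈ ell2 → ∃ u v, u ∈ ell2 ∧ v ∈ ell2 ∧ B' v - l • u = p ∧ B u - l • v = q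

/-- `l` is an eigenvalue of the block operator `(u, v) ↦ (B' v, B u)`. -/
def BlockEigen (B B' : (ℕ → ℂ) →ₗ[ℂ] (ℕ → ℂ)) (l : ℂ) : Prop :=
  ∃ u v, u ∈ ell2 ∧ v ∈ ell2 ∧ ¬ (u = 0 ∧ v = 0) ∧ B' v = l • u ∧ B u = l • v

/-- `l` is a regular point of the operator `T` on its maximal domain in ℓ². -/
def SeqRegular (T : (ℕ → ℂ) → ℕ → ℂ) (l : ℂ) : Prop :=
  (∀ u ∈ ell2, T u = l • u → u = 0) ∧ ∀ p ∈ ell2, ∃ u ∈ ell2, T u - l • u = p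

lemma BlockRegular.swap {B B' : (ℕ → ℂ) →ₗ[ℂ] (ℕ → ℂ)} {l : ℂ} (h : BlockRegular B B' l) :
    BlockRegular B' B l := by
  refine ⟨fun u v hu hv h1 h2 => (h.1 v u hv hu h2 h1).symm, fun p q hp hq => ?_⟩
  obtain ⟨u, v, hu, hv, h1, h2⟩ := h.2 q p hq hp
  exact ⟨v, u, hv, hu, h2, h1⟩

lemma BlockEigen.swap {B B' : (ℕ → ℂ) →ₗ[ℂ] (ℕ → ℂ)} {l : ℂ} (h : BlockEigen B B' l) :
    BlockEigen B' B l := by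
  obtain ⟨u, v, hu, hv, h0, h1, h2⟩ := h
  exact ⟨v, u, hv, hu, fun h => h0 h.symm, h2, h1⟩

lemma mem_spectrumW_iff {T : (ℕ → ℂ) → ℕ → ℂ} {l : ℂ} :
    l ∈ spectrumW (fun _ => 1) T ↔ ¬ SeqRegular T l := by
  simp only [spectrumW, Set.mem_ofPred_eq, SeqRegular, DomW, memL2w_iff_s6]
  refine not_congr (and_congr ?_ ?_)
  · constructor
    · intro h u hu hT
      exact h u ⟨hu, hT ▸ ell2.smul_mem l hu⟩ hT
    · intro h u hu hT
      exact h u hu.1 hT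
  · refine forall₂_congr fun p hp => ?_
    constructor
    · rintro ⟨u, hu, h⟩
      exact ⟨u, hu.1, h⟩
    · rintro ⟨u, hu, h⟩
      refine ⟨u, ⟨hu, ?_⟩, h⟩
      rw [sub_eq_iff_eq_add] at h
      rw [h]
      exact ell2.add_mem hp (ell2.smul_mem l hu)

lemma mem_eigenW_iff {T : (ℕ → ℂ) → ℕ → ℂ} {l : ℂ} :
    l ∈ eigenW (fun _ => 1) T ↔ ∃ u ∈ ell2, u ≠ 0 ∧ T u = l • u := by
  simp only [eigenW, Set.mem_ofPred_eq, DomW, memL2w_iff_s6]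
  constructor
  · rintro ⟨u, hu, h0, h⟩
    exact ⟨u, hu.1, h0, h⟩
  · rintro ⟨u, hu, h0, h⟩
    exact ⟨u, ⟨hu, h ▸ ell2.smul_mem l hu⟩, h0, h⟩

namespace IsFactorPair

variable {B B' : (ℕ → ℂ) →ₗ[ℂ] (ℕ → ℂ)}

/-- Symmetry together with surjectivity of `B' B + 1` gives self-adjointness: an element of the
domain of the adjoint is compared with the solution of the corresponding equation. -/
lemma isSelfAdjointW (h : IsFactorPair B B') :
    IsSelfAdjointW (fun _ => 1) (fun x => B' (B x)) := by
  have hsym : ∀ x y, x ∈ ell2 → y ∈ ell2 → B' (B x) ∈ ell2 → B' (B y) ∈ ell2 →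
      innerW (fun _ => 1) (B' (B x)) y = innerW (fun _ => 1) x (B' (B y)) := by
    intro x y hx hy hTx hTy
    rw [h.symm' y (B x) hy (h.dom x hx hTx) (h.dom y hy hTy) hTx,
      h.symm x (B y) hx (h.dom y hy hTy) (h.dom x hx hTx) hTy]
  intro y z hy hz
  simp only [DomW, memL2w_iff_s6, Set.mem_ofPred_eq] at hy hz ⊢
  constructor
  · intro hxy
    obtain ⟨x₀, hx₀, hBx₀, he⟩ := h.surj (z + y) (ell2.add_mem hz hy)
    have hTx₀ : B' (B x₀) ∈ ell2 := by
      rw [← eq_sub_iff_add_eq] at he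
      rw [he]
      exact ell2.sub_mem (ell2.add_mem hz hy) hx₀
    have key : y - x₀ = 0 := by
      have hd := ell2.sub_mem hy hx₀
      obtain ⟨x, hx, hBx, hxe⟩ := h.surj (y - x₀) hd
      have hTx : B' (B x) ∈ ell2 := by
        rw [← eq_sub_iff_add_eq] at hxe
        rw [hxe]
        exact ell2.sub_mem hd hx
      apply eq_zero_of_innerW_self hd
      rw [innerW_sub_right hd hy hx₀, ← hxe, innerW_add_left hTx hx hy,
        innerW_add_left hTx hx hx₀, hxy x ⟨hx, hTx⟩, hsym x x₀ hx hx₀ hTx hTx₀,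
        ← innerW_add_right hx hz hy, ← innerW_add_right hx hTx₀ hx₀, he, sub_self]
    obtain rfl := sub_eq_zero.1 key
    exact ⟨⟨hx₀, hTx₀⟩, add_right_cancel he⟩
  · rintro ⟨⟨-, hTy⟩, rfl⟩ x ⟨hx, hTx⟩
    exact hsym x y hx hy hTx hTy

lemma seqRegular_sq (h : IsFactorPair B B') {l : ℂ} (hl : BlockRegular B B' l) :
    SeqRegular (fun x => B' (B x)) (l ^ 2) := by
  refine ⟨fun u hu hT => ?_, fun p hp => ?_⟩
  · have hBu : B u ∈ ell2 := h.dom u hu (by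
      have hT' : B' (B u) = l ^ 2 • u := hT
      rw [hT']
      exact ell2.smul_mem _ hu)
    refine h.inj u hu (hl.1 (l • u) (B u) (ell2.smul_mem l hu) hBu ?_ (map_smul _ _ _)).2
    rw [smul_smul, ← pow_two]
    exact hT
  · obtain ⟨u, v, hu, hv, h1, h2⟩ := hl.2 p 0 hp ell2.zero_mem
    by_cases h0 : l = 0
    · subst h0
      obtain ⟨u', v', hu', hv', h1', h2'⟩ := hl.2 0 v ell2.zero_mem hv
      refine ⟨u', hu', ?_⟩
      simp only [zero_smul, sub_zero] at h1 h2'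
      simp [h2', h1]
    · refine ⟨l⁻¹ • u, ell2.smul_mem _ hu, ?_⟩
      rw [sub_eq_zero] at h2
      simp only [map_smul, h2, ← h1, smul_smul, inv_mul_cancel₀ h0, one_smul]
      congr 2
      field_simp

/-- The converse of `seqRegular_sq`. Writing `C` for the block operator,
`(C - l) ψ = (p, 0)` is solved by `ψ = (C + l)(x, 0)` with `(B' B - l²) x = p`. The equation
`(C - l) ψ = (0, q)` is only solved after writing `q = (B B' + 1) w`, which
moves the problem into the domain of `B'`. -/
lemma blockRegular_of_sq (h : IsFactorPair B B') {l : ℂ}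
    (hl : SeqRegular (fun x => B' (B x)) (l ^ 2)) : BlockRegular B B' l := by
  refine ⟨fun u v hu hv h1 h2 => ?_, ?_⟩
  · have hu0 : u = 0 := hl.1 u hu (by
      simp only [h2, map_smul, h1, smul_smul, pow_two])
    subst hu0
    exact ⟨rfl, h.inj' v hv (by simpa using h1)⟩
  have hp : ∀ p ∈ ell2, ∃ x ∈ ell2, B x ∈ ell2 ∧ B' (B x) - l ^ 2 • x = p := by
    intro p hp
    obtain ⟨x, hx, he⟩ := hl.2 p hp
    refine ⟨x, hx, h.dom x hx ?_, he⟩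
    replace he : B' (B x) - l ^ 2 • x = p := he
    rw [sub_eq_iff_eq_add] at he
    rw [he]
    exact ell2.add_mem hp (ell2.smul_mem _ hx)
  have hq : ∀ q ∈ ell2, ∃ u v, u ∈ ell2 ∧ v ∈ ell2 ∧ B' v - l • u = 0 ∧ B u - l • v = q := by
    intro q hq
    obtain ⟨w, hw, hBw, rfl⟩ := h.surj' q hq
    obtain ⟨x, hx, hBx, he⟩ := hp (B' w) hBw
    by_cases h0 : l = 0
    · subst h0
      have hwx : B x - w = 0 := h.inj' _ (ell2.sub_mem hBx hw) (by
        rw [map_sub, ← he]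
        simp)
      refine ⟨B' w + x, 0, ell2.add_mem hBw hx, ell2.zero_mem, by simp, ?_⟩
      rw [map_add, sub_eq_zero.1 hwx]
      simp
    · -- `(B' w, l w)` solves the problem for `(B B' - l²) w`, and
      -- `(l x, B x) - (0, w)` solves it for `l w`.
      refine ⟨B' w + ((1 + l ^ 2) / l) • (l • x), l • w + ((1 + l ^ 2) / l) • (B x - w),
        ell2.add_mem hBw (ell2.smul_mem _ (ell2.smul_mem _ hx)),
        ell2.add_mem (ell2.smul_mem _ hw) (ell2.smul_mem _ (ell2.sub_mem hBx hw)), ?_, ?_⟩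
      · rw [sub_eq_iff_eq_add] at he
        simp only [map_add, map_smul, map_sub]
        have he' : B' (B x) - B' w = l ^ 2 • x := by
          nth_rewrite 1 [he]
          abel
        rw [he']
        module
      · simp only [map_add, map_smul]
        match_scalars <;> field_simp <;> ring
  intro p q hpm hqm
  obtain ⟨x, hx, hBx, he⟩ := hp p hpm
  obtain ⟨u, v, hu, hv, h1, h2⟩ := hq q hqm
  refine ⟨l • x + u, B x + v, ell2.add_mem (ell2.smul_mem _ hx) hu, ell2.add_mem hBx hv, ?_, ?_⟩
  · rw [← he, map_add, sub_eq_zero.1 h1]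
    module
  · rw [← h2, map_add, map_smul]
    module

lemma spectrumW_eq (h : IsFactorPair B B') {C : (ℕ → ℂ) → ℕ → ℂ}
    (hC : ∀ l, l ∈ spectrumW (fun _ => 1) C ↔ ¬ BlockRegular B B' l) :
    spectrumW (fun _ => 1) (fun x => B' (B x))
      = (fun z => z ^ 2) '' spectrumW (fun _ => 1) C := by
  ext m
  simp only [Set.mem_image, hC, mem_spectrumW_iff]
  constructor
  · intro hm
    obtain ⟨l, rfl⟩ := IsAlgClosed.exists_pow_nat_eq m (n := 2) (by norm_num)
    exact ⟨l, fun hl => hm (h.seqRegular_sq hl), rfl⟩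
  · rintro ⟨l, hl, rfl⟩ hm
    exact hl (h.blockRegular_of_sq hm)

lemma eigenW_eq (h : IsFactorPair B B') {C : (ℕ → ℂ) → ℕ → ℂ}
    (hC : ∀ l, l ∈ eigenW (fun _ => 1) C ↔ BlockEigen B B' l) :
    eigenW (fun _ => 1) (fun x => B' (B x)) = (fun z => z ^ 2) '' eigenW (fun _ => 1) C := by
  ext m
  simp only [Set.mem_image, hC, mem_eigenW_iff]
  constructor
  · rintro ⟨x, hx, h0, he⟩
    obtain ⟨l, rfl⟩ := IsAlgClosed.exists_pow_nat_eq m (n := 2) (by norm_num)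
    have hBx : B x ∈ ell2 := h.dom x hx (he ▸ ell2.smul_mem _ hx)
    refine ⟨l, ⟨l • x, B x, ell2.smul_mem _ hx, hBx, fun h1 => h0 (h.inj x hx h1.2), ?_,
      map_smul _ _ _⟩, rfl⟩
    rw [he, smul_smul, pow_two]
  · rintro ⟨l, ⟨u, v, hu, hv, h0, h1, h2⟩, rfl⟩
    refine ⟨u, hu, ?_, by simp only [h2, map_smul, h1, smul_smul, pow_two]⟩
    rintro rfl
    exact h0 ⟨rfl, h.inj' v hv (by simpa using h1)⟩

end IsFactorPair

/-! ### Splitting a sequence into its even and odd parts -/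

/-- The sequence with even part `u` and odd part `v`. -/
def merge (u v : ℕ → ℂ) : ℕ → ℂ := evenEmbed u + oddEmbed v

lemma merge_even (u v : ℕ → ℂ) (n : ℕ) : merge u v (2 * n) = u n := by
  simp [merge, evenEmbed, oddEmbed]

lemma merge_odd (u v : ℕ → ℂ) (n : ℕ) : merge u v (2 * n + 1) = v n := by
  have h1 : (2 * n + 1) % 2 = 1 := by omega
  have h2 : (2 * n + 1) / 2 = n := by omega
  simp [merge, evenEmbed, oddEmbed, h1, h2]

lemma evenEmbed_eq (u : ℕ → ℂ) : evenEmbed u = merge u 0 := by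
  funext n
  simp [merge, oddEmbed]

lemma oddEmbed_eq (u : ℕ → ℂ) : oddEmbed u = merge 0 u := by
  funext n
  simp [merge, evenEmbed]

lemma ext_even_odd {x y : ℕ → ℂ} (he : ∀ n, x (2 * n) = y (2 * n))
    (ho : ∀ n, x (2 * n + 1) = y (2 * n + 1)) : x = y := by
  funext n
  obtain ⟨k, rfl | rfl⟩ := Nat.even_or_odd' n
  exacts [he k, ho k]

lemma exists_merge (x : ℕ → ℂ) : ∃ u v, x = merge u v :=
  ⟨fun n => x (2 * n), fun n => x (2 * n + 1),
    ext_even_odd (fun n => by rw [merge_even]) (fun n => by rw [merge_odd])⟩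

lemma merge_inj {u v u' v' : ℕ → ℂ} : merge u v = merge u' v' ↔ u = u' ∧ v = v' := by
  constructor
  · intro h
    constructor <;> funext n
    · rw [← merge_even u v, h, merge_even]
    · rw [← merge_odd u v, h, merge_odd]
  · rintro ⟨rfl, rfl⟩
    rfl

lemma merge_zero : merge 0 0 = 0 :=
  ext_even_odd (fun n => by rw [merge_even]; rfl) (fun n => by rw [merge_odd]; rfl)

lemma merge_eq_zero {u v : ℕ → ℂ} : merge u v = 0 ↔ u = 0 ∧ v = 0 := by
  nth_rewrite 1 [← merge_zero]
  exact merge_inj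

lemma smul_merge (l : ℂ) (u v : ℕ → ℂ) : l • merge u v = merge (l • u) (l • v) :=
  ext_even_odd (fun n => by simp [merge_even]) (fun n => by simp [merge_odd])

lemma merge_add_merge (u v u' v' : ℕ → ℂ) :
    merge u v + merge u' v' = merge (u + u') (v + v') :=
  ext_even_odd (fun n => by simp [merge_even]) (fun n => by simp [merge_odd])

lemma merge_sub_merge (u v u' v' : ℕ → ℂ) :
    merge u v - merge u' v' = merge (u - u') (v - v') :=
  ext_even_odd (fun n => by simp [merge_even]) (fun n => by simp [merge_odd])

lemma merge_mem_ell2 {u v : ℕ → ℂ} : merge u v ∈ ell2 ↔ u ∈ ell2 ∧ v ∈ ell2 := by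
  simp only [mem_ell2_iff]
  constructor
  · intro h
    have he := h.comp_injective (i := fun n : ℕ => 2 * n) (fun m n h => by simpa using h)
    have ho := h.comp_injective (i := fun n : ℕ => 2 * n + 1) (fun m n h => by simpa using h)
    simp only [Function.comp_def, merge_even, merge_odd] at he ho
    exact ⟨he, ho⟩
  · rintro ⟨hu, hv⟩
    refine Summable.even_add_odd ?_ ?_
    · simpa only [merge_even] using hu
    · simpa only [merge_odd] using hv

lemma innerW_merge {u v u' v' : ℕ → ℂ} (hu : u ∈ ell2) (hv : v ∈ ell2) (hu' : u' ∈ ell2)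
    (hv' : v' ∈ ell2) :
    innerW (fun _ => 1) (merge u v) (merge u' v')
      = innerW (fun _ => 1) u u' + innerW (fun _ => 1) v v' := by
  simp only [innerW_one]
  rw [← tsum_even_add_odd]
  · simp only [merge_even, merge_odd]
  · simpa only [merge_even] using summable_inner hu hu'
  · simpa only [merge_odd] using summable_inner hv hv'

lemma zero_innerW (x : ℕ → ℂ) : innerW (fun _ => 1) 0 x = 0 := by simp [innerW_one]

lemma innerW_zero (x : ℕ → ℂ) : innerW (fun _ => 1) x 0 = 0 := by simp [innerW_one]

/-! ### The two blocks of a Jacobi matrix with zero diagonal -/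

/-- The block of the zero-diagonal Jacobi matrix that maps even parts to odd parts. -/
def evenToOdd (a : ℕ → ℝ) : (ℕ → ℂ) →ₗ[ℂ] (ℕ → ℂ) where
  toFun x n := (a (2 * n) : ℂ) * x n + (a (2 * n + 1) : ℂ) * x (n + 1)
  map_add' x y := by
    funext n
    simp only [Pi.add_apply]
    ring
  map_smul' c x := by
    funext n
    simp only [Pi.smul_apply, smul_eq_mul, RingHom.id_apply]
    ring

/-- The block of the zero-diagonal Jacobi matrix that maps odd parts to even parts. -/
def oddToEven (a : ℕ → ℝ) : (ℕ → ℂ) →ₗ[ℂ] (ℕ → ℂ) where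
  toFun x n := match n with
    | 0 => (a 0 : ℂ) * x 0
    | n + 1 => (a (2 * n + 1) : ℂ) * x n + (a (2 * n + 2) : ℂ) * x (n + 1)
  map_add' x y := by
    funext n
    cases n <;> simp only [Pi.add_apply] <;> ring
  map_smul' c x := by
    funext n
    cases n <;> simp only [Pi.smul_apply, smul_eq_mul, RingHom.id_apply] <;> ring

lemma evenToOdd_apply (a : ℕ → ℝ) (x : ℕ → ℂ) (n : ℕ) :
    evenToOdd a x n = (a (2 * n) : ℂ) * x n + (a (2 * n + 1) : ℂ) * x (n + 1) := rfl

lemma oddToEven_zero (a : ℕ → ℝ) (x : ℕ → ℂ) : oddToEven a x 0 = (a 0 : ℂ) * x 0 := rfl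

lemma oddToEven_succ (a : ℕ → ℝ) (x : ℕ → ℂ) (n : ℕ) :
    oddToEven a x (n + 1) = (a (2 * n + 1) : ℂ) * x n + (a (2 * n + 2) : ℂ) * x (n + 1) := rfl

lemma jacobiAct_merge (a : ℕ → ℝ) (u v : ℕ → ℂ) :
    jacobiAct a (fun _ => 0) (merge u v) = merge (oddToEven a v) (evenToOdd a u) := by
  refine ext_even_odd (fun n => ?_) (fun n => ?_)
  · rw [merge_even]
    cases n with
    | zero =>
      have := merge_odd u v 0
      simp only [mul_zero, zero_add] at this
      simp [jacobiAct, oddToEven_zero, this]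
    | succ n =>
      have h1 := merge_odd u v n
      have h2 := merge_odd u v (n + 1)
      rw [show 2 * (n + 1) + 1 = 2 * n + 1 + 2 by ring] at h2
      rw [show 2 * (n + 1) = 2 * n + 1 + 1 by ring, oddToEven_succ, jacobiAct, h1, h2]
      simp
  · rw [merge_odd, evenToOdd_apply, jacobiAct, merge_even,
      show 2 * n + 2 = 2 * (n + 1) by ring, merge_even]
    simp

lemma jacobi_spectrum_iff (a : ℕ → ℝ) (l : ℂ) :
    l ∈ spectrumW (fun _ => 1) (jacobiAct a fun _ => 0)
      ↔ ¬ BlockRegular (evenToOdd a) (oddToEven a) l := by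
  rw [mem_spectrumW_iff]
  refine not_congr (and_congr ?_ ?_)
  · constructor
    · intro h u v hu hv h1 h2
      refine merge_eq_zero.1 (h (merge u v) (merge_mem_ell2.2 ⟨hu, hv⟩) ?_)
      rw [jacobiAct_merge, smul_merge, h1, h2]
    · intro h x hx he
      obtain ⟨u, v, rfl⟩ := exists_merge x
      rw [jacobiAct_merge, smul_merge, merge_inj] at he
      rw [merge_mem_ell2] at hx
      exact merge_eq_zero.2 (h u v hx.1 hx.2 he.1 he.2)
  · constructor
    · intro h p q hp hq
      obtain ⟨x, hx, he⟩ := h (merge p q) (merge_mem_ell2.2 ⟨hp, hq⟩)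
      obtain ⟨u, v, rfl⟩ := exists_merge x
      rw [jacobiAct_merge, smul_merge, merge_sub_merge, merge_inj] at he
      rw [merge_mem_ell2] at hx
      exact ⟨u, v, hx.1, hx.2, he.1, he.2⟩
    · intro h y hy
      obtain ⟨p, q, rfl⟩ := exists_merge y
      rw [merge_mem_ell2] at hy
      obtain ⟨u, v, hu, hv, h1, h2⟩ := h p q hy.1 hy.2
      refine ⟨merge u v, merge_mem_ell2.2 ⟨hu, hv⟩, ?_⟩
      rw [jacobiAct_merge, smul_merge, merge_sub_merge, h1, h2]

lemma jacobi_eigen_iff (a : ℕ → ℝ) (l : ℂ) :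
    l ∈ eigenW (fun _ => 1) (jacobiAct a fun _ => 0)
      ↔ BlockEigen (evenToOdd a) (oddToEven a) l := by
  rw [mem_eigenW_iff]
  constructor
  · rintro ⟨x, hx, h0, he⟩
    obtain ⟨u, v, rfl⟩ := exists_merge x
    rw [jacobiAct_merge, smul_merge, merge_inj] at he
    rw [merge_mem_ell2] at hx
    exact ⟨u, v, hx.1, hx.2, fun h => h0 (merge_eq_zero.2 h), he.1, he.2⟩
  · rintro ⟨u, v, hu, hv, h0, h1, h2⟩
    refine ⟨merge u v, merge_mem_ell2.2 ⟨hu, hv⟩, fun h => h0 (merge_eq_zero.1 h), ?_⟩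
    rw [jacobiAct_merge, smul_merge, h1, h2]

lemma jacobiAct_even_eq (a ae be : ℕ → ℝ)
    (hae : ∀ n, ae n = a (2 * n) * a (2 * n + 1))
    (hbe : ∀ n, be n = (if n = 0 then 0 else a (2 * n - 1) ^ 2) + a (2 * n) ^ 2) :
    jacobiAct ae be = fun x => oddToEven a (evenToOdd a x) := by
  funext x n
  cases n with
  | zero =>
    simp only [jacobiAct, oddToEven_zero, evenToOdd_apply, hae, hbe]
    push_cast
    simp
    ring
  | succ n =>
    simp only [jacobiAct, oddToEven_succ, evenToOdd_apply, hae, hbe,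
      Nat.succ_ne_zero, if_false, show 2 * (n + 1) = 2 * n + 2 by ring]
    push_cast
    ring

lemma jacobiAct_odd_eq (a ao bo : ℕ → ℝ)
    (hao : ∀ n, ao n = a (2 * n + 1) * a (2 * n + 2))
    (hbo : ∀ n, bo n = a (2 * n) ^ 2 + a (2 * n + 1) ^ 2) :
    jacobiAct ao bo = fun x => evenToOdd a (oddToEven a x) := by
  funext x n
  cases n with
  | zero =>
    simp only [jacobiAct, oddToEven_zero, oddToEven_succ, evenToOdd_apply, hao, hbo]
    push_cast
    ring
  | succ n =>
    simp only [jacobiAct, oddToEven_succ, evenToOdd_apply, hao, hbo,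
      show 2 * (n + 1) = 2 * n + 2 by ring]
    push_cast
    ring

/-! ### Solvability of `C² x + x = y` -/

lemma memℓp_two_iff {x : ℕ → ℂ} : Memℓp x 2 ↔ x ∈ ell2 := by
  rw [memℓp_gen_iff (by norm_num), mem_ell2_iff]
  norm_num

lemma lp_coe_mem (f : lp (fun _ : ℕ => ℂ) 2) : (f : ℕ → ℂ) ∈ ell2 :=
  memℓp_two_iff.1 (lp.memℓp f)

lemma lp_inner_eq (f g : lp (fun _ : ℕ => ℂ) 2) :
    inner ℂ f g = innerW (fun _ => 1) (f : ℕ → ℂ) (g : ℕ → ℂ) := by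
  rw [lp.inner_eq_tsum, innerW_one]
  refine tsum_congr fun n => ?_
  rw [RCLike.inner_apply, mul_comm]
  rfl

lemma jacobiAct_add (a b : ℕ → ℝ) (x y : ℕ → ℂ) :
    jacobiAct a b (x + y) = jacobiAct a b x + jacobiAct a b y := by
  funext n
  cases n <;> simp only [jacobiAct, Pi.add_apply] <;> ring

lemma jacobiAct_smul (a b : ℕ → ℝ) (c : ℂ) (x : ℕ → ℂ) :
    jacobiAct a b (c • x) = c • jacobiAct a b x := by
  funext n
  cases n <;> simp only [jacobiAct, Pi.smul_apply, smul_eq_mul] <;> ring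

/-- The graph of the maximal Jacobi operator, in the Hilbert space ℓ² ⊕ ℓ². -/
def jacobiGraph (a b : ℕ → ℝ) :
    Submodule ℂ (WithLp 2 (lp (fun _ : ℕ => ℂ) 2 × lp (fun _ : ℕ => ℂ) 2)) where
  carrier := {g | jacobiAct a b (g.fst : ℕ → ℂ) = (g.snd : ℕ → ℂ)}
  zero_mem' := by
    have := jacobiAct_smul a b 0 0
    rw [zero_smul, zero_smul] at this
    exact this
  add_mem' := by
    intro f g hf hg
    simp only [Set.mem_ofPred_eq, WithLp.add_fst, WithLp.add_snd, lp.coeFn_add,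
      jacobiAct_add] at *
    rw [hf, hg]
  smul_mem' := by
    intro c g hg
    simp only [Set.mem_ofPred_eq, WithLp.smul_fst, WithLp.smul_snd, lp.coeFn_smul,
      jacobiAct_smul] at *
    rw [hg]

lemma continuous_lp_eval (n : ℕ) :
    Continuous fun f : lp (fun _ : ℕ => ℂ) 2 => (f : ℕ → ℂ) n :=
  (continuous_apply n).comp (lp.uniformContinuous_coe (p := 2)).continuous

lemma isClosed_jacobiGraph (a b : ℕ → ℝ) :
    IsClosed (jacobiGraph a b : Set (WithLp 2 (lp (fun _ : ℕ => ℂ) 2 × lp (fun _ : ℕ => ℂ) 2))) := by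
  have hf : ∀ n, Continuous fun g : WithLp 2 (lp (fun _ : ℕ => ℂ) 2 × lp (fun _ : ℕ => ℂ) 2) =>
      (g.fst : ℕ → ℂ) n := fun n =>
    (continuous_lp_eval n).comp (continuous_fst.comp (WithLp.prod_continuous_ofLp 2 _ _))
  have hs : ∀ n, Continuous fun g : WithLp 2 (lp (fun _ : ℕ => ℂ) 2 × lp (fun _ : ℕ => ℂ) 2) =>
      (g.snd : ℕ → ℂ) n := fun n =>
    (continuous_lp_eval n).comp (continuous_snd.comp (WithLp.prod_continuous_ofLp 2 _ _))
  refine isClosed_eq (continuous_pi fun n => ?_) (continuous_pi hs)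
  cases n with
  | zero => exact ((hf 0).const_mul _).add ((hf 1).const_mul _)
  | succ n =>
    exact (((hf n).const_mul _).add ((hf (n + 1)).const_mul _)).add ((hf (n + 2)).const_mul _)

/-- Von Neumann's argument: splitting `(y, 0)` along the graph of `C` and its orthogonal
complement, which by self-adjointness consists of the pairs `(-C q, q)`. -/
lemma exists_sq_add_self (a b : ℕ → ℝ) (hsa : IsSelfAdjointW (fun _ => 1) (jacobiAct a b))
    {y : ℕ → ℂ} (hy : y ∈ ell2) :
    ∃ x ∈ ell2, jacobiAct a b x ∈ ell2 ∧ jacobiAct a b (jacobiAct a b x) + x = y := by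
  have : CompleteSpace (jacobiGraph a b) :=
    (isClosed_jacobiGraph a b).completeSpace_coe
  let y' : lp (fun _ : ℕ => ℂ) 2 := ⟨y, memℓp_two_iff.2 hy⟩
  obtain ⟨g, hg, h, hh, he⟩ :=
    (jacobiGraph a b).exists_add_mem_mem_orthogonal (WithLp.toLp 2 (y', 0))
  have hg' : jacobiAct a b (g.fst : ℕ → ℂ) = (g.snd : ℕ → ℂ) := hg
  have h1 : y = (g.fst : ℕ → ℂ) + (h.fst : ℕ → ℂ) :=
    congrArg (fun z => ((WithLp.fst z : lp (fun _ : ℕ => ℂ) 2) : ℕ → ℂ)) he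
  have h2 : (0 : ℕ → ℂ) = (g.snd : ℕ → ℂ) + (h.snd : ℕ → ℂ) :=
    congrArg (fun z => ((WithLp.snd z : lp (fun _ : ℕ => ℂ) 2) : ℕ → ℂ)) he
  have hadj := (hsa (h.snd : ℕ → ℂ) (-(h.fst : ℕ → ℂ)) (lp_coe_mem _)
    (ell2.neg_mem (lp_coe_mem _))).1 (by
      rintro x ⟨hx, hCx⟩
      have ho := (Submodule.mem_orthogonal _ _).1 hh
        (WithLp.toLp 2 (⟨x, memℓp_two_iff.2 hx⟩, ⟨jacobiAct a b x, memℓp_two_iff.2 hCx⟩)) rfl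
      rw [WithLp.prod_inner_apply, lp_inner_eq, lp_inner_eq] at ho
      refine (eq_neg_of_add_eq_zero_right ho).trans ?_
      rw [innerW_one, innerW_one, ← tsum_neg]
      exact tsum_congr fun n => (mul_neg _ _).symm)
  have h3 : (h.snd : ℕ → ℂ) = (-1 : ℂ) • (g.snd : ℕ → ℂ) := by
    rw [neg_one_smul]
    exact eq_neg_of_add_eq_zero_right h2.symm
  refine ⟨(g.fst : ℕ → ℂ), lp_coe_mem _, hg' ▸ lp_coe_mem _, ?_⟩
  have h4 := hadj.2
  rw [h3, jacobiAct_smul, neg_one_smul, neg_inj] at h4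
  rw [hg', h4, h1, add_comm]

/-! ### Comparison of solutions -/

/-- The alternating sequence `(-1)ⁿ P n` is formally annihilated by `evenToOdd a`, so by `hker` it
is not square-summable. A square-summable `u` with `u n = (-1)ⁿ s u 0`, `s ≥ P n`, must therefore
have `u 0 = 0`, hence vanish. -/
lemma eq_zero_of_kernel {a : ℕ → ℝ} (ha : ∀ n, 0 < a n)
    (hker : ∀ x ∈ ell2, evenToOdd a x = 0 → x = 0) {u : ℕ → ℂ} (hu : u ∈ ell2)
    {P : ℕ → ℝ} (hP0 : P 0 = 1) (hP : ∀ n, P (n + 1) = a (2 * n) * P n / a (2 * n + 1))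
    (hPu : ∀ n, ∃ s : ℝ, P n ≤ s ∧ u n = (-1) ^ n * s * u 0) : u = 0 := by
  by_cases h0 : u 0 = 0
  · funext n
    obtain ⟨s, -, h⟩ := hPu n
    simpa [h0] using h
  have hPpos : ∀ n, 0 < P n := by
    intro n
    induction n with
    | zero => simp [hP0]
    | succ n ih =>
      rw [hP]
      have := ha (2 * n)
      have := ha (2 * n + 1)
      positivity
  exfalso
  have hx : (fun n => (-1 : ℂ) ^ n * (P n : ℂ)) ∈ ell2 := by
    rw [mem_ell2_iff] at hu ⊢
    refine Summable.of_nonneg_of_le (fun n => by positivity) (fun n => ?_)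
      (hu.mul_left ((‖u 0‖ ^ 2)⁻¹))
    obtain ⟨s, hs, h⟩ := hPu n
    have hn : 0 < ‖u 0‖ := norm_pos_iff.2 h0
    have hs0 : 0 < s := (hPpos n).trans_le hs
    rw [h]
    simp only [norm_mul, norm_pow, norm_neg, norm_one, one_pow, one_mul, Complex.norm_real,
      Real.norm_eq_abs, abs_of_pos (hPpos n), abs_of_pos hs0]
    have : (‖u 0‖ ^ 2)⁻¹ * (s * ‖u 0‖) ^ 2 = s ^ 2 := by field_simp
    rw [this]
    exact pow_le_pow_left₀ (hPpos n).le hs 2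
  have := hker _ hx (by
    funext n
    have h1 : (a (2 * n + 1) : ℂ) ≠ 0 := by exact_mod_cast (ha (2 * n + 1)).ne'
    rw [evenToOdd_apply, hP, Pi.zero_apply]
    push_cast
    field_simp
    ring)
  simpa [hP0] using congrFun this 0

/-- The solution of `a (2n) P n = a (2n+1) P (n+1)` with `P 0 = 1`; the sequence `(-1)ⁿ P n` spans
the formal kernel of `evenToOdd a`. -/
def kernelSeq (a : ℕ → ℝ) : ℕ → ℝ
  | 0 => 1
  | n + 1 => a (2 * n) * kernelSeq a n / a (2 * n + 1)

/-- A square-summable formal solution of `C² u = -u` supported on the even coordinates vanishes.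
With alternating signs removed, `u` and `C u` solve a recurrence with positive coefficients, which
makes `u` grow at least as fast as `kernelSeq a`. -/
lemma eq_zero_of_even {a : ℕ → ℝ} (ha : ∀ n, 0 < a n)
    (hker : ∀ x ∈ ell2, evenToOdd a x = 0 → x = 0) {u : ℕ → ℂ} (hu : u ∈ ell2)
    (he : oddToEven a (evenToOdd a u) = -u) : u = 0 := by
  have hac : ∀ n, (a n : ℂ) ≠ 0 := fun n => by exact_mod_cast (ha n).ne'
  refine eq_zero_of_kernel ha hker hu (P := kernelSeq a) rfl (fun n => rfl) ?_
  have key : ∀ n, ∃ s t : ℝ, kernelSeq a n ≤ s ∧ 0 ≤ s ∧ 0 ≤ t ∧ u n = (-1) ^ n * s * u 0 ∧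
      evenToOdd a u n = -((-1) ^ n * t * u 0) := by
    intro n
    induction n with
    | zero =>
      refine ⟨1, 1 / a 0, le_rfl, zero_le_one, (one_div_pos.2 (ha 0)).le, by simp, ?_⟩
      have := congrFun he 0
      rw [oddToEven_zero] at this
      have h0 := hac 0
      push_cast
      field_simp
      simpa [mul_comm] using this
    | succ n ih =>
      obtain ⟨s, t, hs, hs0, ht, h1, h2⟩ := ih
      have p0 := ha (2 * n)
      have p1 := ha (2 * n + 1)
      have p2 := ha (2 * n + 2)
      have c1 := hac (2 * n + 1)
      have c2 := hac (2 * n + 2)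
      have hs' : 0 ≤ (t + a (2 * n) * s) / a (2 * n + 1) := by positivity
      have hu' : u (n + 1)
          = (-1) ^ (n + 1) * (((t + a (2 * n) * s) / a (2 * n + 1) : ℝ) : ℂ) * u 0 := by
        have h3 := h2
        rw [evenToOdd_apply, h1] at h3
        push_cast
        field_simp
        linear_combination h3
      refine ⟨(t + a (2 * n) * s) / a (2 * n + 1),
        ((t + a (2 * n) * s) / a (2 * n + 1) + a (2 * n + 1) * t) / a (2 * n + 2),
        ?_, hs', by positivity, hu', ?_⟩
      · rw [kernelSeq]
        gcongr
        nlinarith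
      · have h3 := congrFun he (n + 1)
        rw [oddToEven_succ, h2, Pi.neg_apply, hu'] at h3
        apply mul_left_cancel₀ c2
        rw [Complex.ofReal_div _ (a (2 * n + 2))]
        rw [Complex.ofReal_add]
        have h4 : ∀ z w v : ℂ, (a (2 * n + 2) : ℂ) * -(w * (z / (a (2 * n + 2) : ℂ)) * v)
            = -(w * z * v) := by
          intro z w v
          field_simp
        rw [h4]
        push_cast at h3 ⊢
        linear_combination h3
  intro n
  obtain ⟨s, t, hs, -, -, h1, -⟩ := key n
  exact ⟨s, hs, h1⟩

/-- The analogue of `eq_zero_of_even` for the odd coordinates; here the comparison sequence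
belongs to the shifted weights. -/
lemma eq_zero_of_odd {a : ℕ → ℝ} (ha : ∀ n, 0 < a n)
    (hker : ∀ x ∈ ell2, evenToOdd (fun n => a (n + 1)) x = 0 → x = 0) {u : ℕ → ℂ}
    (hu : u ∈ ell2) (he : evenToOdd a (oddToEven a u) = -u) : u = 0 := by
  have hac : ∀ n, (a n : ℂ) ≠ 0 := fun n => by exact_mod_cast (ha n).ne'
  refine eq_zero_of_kernel (fun n => ha (n + 1)) hker hu
    (P := kernelSeq fun n => a (n + 1)) rfl (fun n => rfl) ?_
  have key : ∀ n, ∃ s t : ℝ, kernelSeq (fun n => a (n + 1)) n ≤ s ∧ 0 ≤ s ∧ 0 ≤ t ∧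
      u n = (-1) ^ n * s * u 0 ∧ oddToEven a u n = (-1) ^ n * t * u 0 := by
    intro n
    induction n with
    | zero =>
      refine ⟨1, a 0, le_rfl, zero_le_one, (ha 0).le, by simp, ?_⟩
      simp [oddToEven_zero]
    | succ n ih =>
      obtain ⟨s, t, hs, hs0, ht, h1, h2⟩ := ih
      have p0 := ha (2 * n)
      have p1 := ha (2 * n + 1)
      have p2 := ha (2 * n + 2)
      have c1 := hac (2 * n + 1)
      have c2 := hac (2 * n + 2)
      obtain ⟨t', ht'⟩ : ∃ t', t' = (s + a (2 * n) * t) / a (2 * n + 1) := ⟨_, rfl⟩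
      have ht0 : 0 ≤ t' := by
        rw [ht']
        positivity
      have hv' : oddToEven a u (n + 1) = (-1) ^ (n + 1) * t' * u 0 := by
        have h3 := congrFun he n
        rw [evenToOdd_apply, h2, Pi.neg_apply, h1] at h3
        rw [ht']
        push_cast
        field_simp
        linear_combination h3
      refine ⟨(t' + a (2 * n + 1) * s) / a (2 * n + 2), t', ?_, by positivity, ht0, ?_, hv'⟩
      · rw [kernelSeq]
        gcongr
        nlinarith
      · have h3 := hv'
        rw [oddToEven_succ, h1] at h3
        push_cast
        field_simp
        linear_combination h3
  intro n
  obtain ⟨s, t, hs, -, -, h1, -⟩ := key n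
  exact ⟨s, hs, h1⟩

lemma kernel_of_eigen {a : ℕ → ℝ}
    (h : (0 : ℂ) ∉ eigenW (fun _ => 1) (jacobiAct a fun _ => 0)) :
    (∀ x ∈ ell2, evenToOdd a x = 0 → x = 0) ∧ ∀ x ∈ ell2, oddToEven a x = 0 → x = 0 := by
  rw [jacobi_eigen_iff] at h
  constructor
  · intro x hx he
    by_contra h0
    exact h ⟨x, 0, hx, ell2.zero_mem, fun h => h0 h.1, by simp, by simp [he]⟩
  · intro x hx he
    by_contra h0
    exact h ⟨0, x, ell2.zero_mem, hx, fun h => h0 h.2, by simp [he], by simp⟩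

/-- If `B' B + 1` is onto and has no square-summable formal null vector, then the maximal domain
of `B' B` is contained in that of `B`. -/
lemma dom_of_surj {B B' : (ℕ → ℂ) →ₗ[ℂ] (ℕ → ℂ)}
    (hsurj : ∀ y ∈ ell2, ∃ x ∈ ell2, B x ∈ ell2 ∧ B' (B x) + x = y)
    (hz : ∀ u ∈ ell2, B' (B u) = -u → u = 0) :
    ∀ x ∈ ell2, B' (B x) ∈ ell2 → B x ∈ ell2 := by
  intro x hx hTx
  obtain ⟨x', hx', hBx', he⟩ := hsurj _ (ell2.add_mem hTx hx)
  have : x - x' = 0 := hz _ (ell2.sub_mem hx hx') (by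
    rw [map_sub, map_sub, eq_sub_of_add_eq he]
    abel)
  rwa [sub_eq_zero.1 this]

lemma isFactorPair {a : ℕ → ℝ} (ha : ∀ n, 0 < a n)
    (hsa : IsSelfAdjointW (fun _ => 1) (jacobiAct a fun _ => 0))
    (h0 : (0 : ℂ) ∉ eigenW (fun _ => 1) (jacobiAct a fun _ => 0))
    (h0' : (0 : ℂ) ∉ eigenW (fun _ => 1) (jacobiAct (fun n => a (n + 1)) fun _ => 0)) :
    IsFactorPair (evenToOdd a) (oddToEven a) := by
  have hker := kernel_of_eigen h0
  have hsolve : ∀ p q, p ∈ ell2 → q ∈ ell2 → ∃ u v, u ∈ ell2 ∧ v ∈ ell2 ∧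
      evenToOdd a u ∈ ell2 ∧ oddToEven a v ∈ ell2 ∧ oddToEven a (evenToOdd a u) + u = p ∧
      evenToOdd a (oddToEven a v) + v = q := by
    intro p q hp hq
    obtain ⟨x, hx, hCx, he⟩ := exists_sq_add_self a _ hsa (merge_mem_ell2.2 ⟨hp, hq⟩)
    obtain ⟨u, v, rfl⟩ := exists_merge x
    rw [jacobiAct_merge, jacobiAct_merge, merge_add_merge, merge_inj] at he
    rw [jacobiAct_merge, merge_mem_ell2] at hCx
    rw [merge_mem_ell2] at hx
    exact ⟨u, v, hx.1, hx.2, hCx.2, hCx.1, he.1, he.2⟩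
  have hsurj : ∀ y ∈ ell2, ∃ x ∈ ell2, evenToOdd a x ∈ ell2 ∧
      oddToEven a (evenToOdd a x) + x = y := by
    intro y hy
    obtain ⟨u, v, hu, -, h1, -, h2, -⟩ := hsolve y 0 hy ell2.zero_mem
    exact ⟨u, hu, h1, h2⟩
  have hsurj' : ∀ y ∈ ell2, ∃ x ∈ ell2, oddToEven a x ∈ ell2 ∧
      evenToOdd a (oddToEven a x) + x = y := by
    intro y hy
    obtain ⟨u, v, -, hv, -, h1, -, h2⟩ := hsolve 0 y ell2.zero_mem hy
    exact ⟨v, hv, h1, h2⟩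
  have hsym : ∀ x y, x ∈ ell2 → y ∈ ell2 → jacobiAct a (fun _ => 0) x ∈ ell2 →
      jacobiAct a (fun _ => 0) y ∈ ell2 →
      innerW (fun _ => 1) (jacobiAct a (fun _ => 0) x) y
        = innerW (fun _ => 1) x (jacobiAct a (fun _ => 0) y) :=
    fun x y hx hy hCx hCy => (hsa y _ hy hCy).2 ⟨⟨hy, hCy⟩, rfl⟩ x ⟨hx, hCx⟩
  have z := ell2.zero_mem
  refine ⟨fun u v hu hv hBu hBv => ?_, fun u v hu hv hBu hBv => ?_, hsurj, hsurj',
    dom_of_surj hsurj fun u hu he => eq_zero_of_even ha hker.1 hu he,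
    dom_of_surj hsurj' fun u hu he => eq_zero_of_odd ha (kernel_of_eigen h0').1 hu he,
    hker.1, hker.2⟩
  · have := hsym (merge u 0) (merge 0 v) (merge_mem_ell2.2 ⟨hu, z⟩) (merge_mem_ell2.2 ⟨z, hv⟩)
      (by simpa [jacobiAct_merge, merge_mem_ell2] using hBu)
      (by simpa [jacobiAct_merge, merge_mem_ell2] using hBv)
    rw [jacobiAct_merge, jacobiAct_merge, map_zero, map_zero, innerW_merge z hBu z hv,
      innerW_merge hu z hBv z] at this
    simpa [zero_innerW] using this
  · have := hsym (merge 0 v) (merge u 0) (merge_mem_ell2.2 ⟨z, hv⟩) (merge_mem_ell2.2 ⟨hu, z⟩)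
      (by simpa [jacobiAct_merge, merge_mem_ell2] using hBv)
      (by simpa [jacobiAct_merge, merge_mem_ell2] using hBu)
    rw [jacobiAct_merge, jacobiAct_merge, map_zero, map_zero, innerW_merge hBv z hu z,
      innerW_merge z hv z hBu] at this
    simpa [zero_innerW, innerW_zero] using this

/-- Proposition 3: for a self-adjoint Jacobi matrix `C` with zero diagonal, the
restrictions of `C ∘ C` to the spans of the even (resp. odd) coordinate vectors are,
via the natural unitaries `evenEmbed`/`oddEmbed`, the Jacobi matrices with entries
`aₙᵉ = a₂ₙa₂ₙ₊₁`, `bₙᵉ = a₂ₙ₋₁² + a₂ₙ²` (with `a₋₁ = 0`) resp.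
`aₙᵒ = a₂ₙ₊₁a₂ₙ₊₂`, `bₙᵒ = a₂ₙ² + a₂ₙ₊₁²`; moreover if `0` is not an eigenvalue of `C`
nor of the shifted matrix `C̃`, then both are self-adjoint and have spectrum
(resp. point spectrum) equal to the square of that of `C`. -/
theorem jacobi_square_even_odd_restrictions
    (a : ℕ → ℝ) (ha : ∀ n, 0 < a n)
    (hsa : IsSelfAdjointW (fun _ => 1) (jacobiAct a fun _ => 0))
    (hsa' : IsSelfAdjointW (fun _ => 1) (jacobiAct (fun n => a (n + 1)) fun _ => 0))
    (ae be ao bo : ℕ → ℝ)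
    (hae : ∀ n, ae n = a (2 * n) * a (2 * n + 1))
    (hbe : ∀ n, be n = (if n = 0 then 0 else a (2 * n - 1) ^ 2) + a (2 * n) ^ 2)
    (hao : ∀ n, ao n = a (2 * n + 1) * a (2 * n + 2))
    (hbo : ∀ n, bo n = a (2 * n) ^ 2 + a (2 * n + 1) ^ 2) :
    (∀ x : ℕ → ℂ,
        jacobiAct a (fun _ => 0) (jacobiAct a (fun _ => 0) (evenEmbed x))
          = evenEmbed (jacobiAct ae be x)) ∧
    (∀ x : ℕ → ℂ,
        jacobiAct a (fun _ => 0) (jacobiAct a (fun _ => 0) (oddEmbed x))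
          = oddEmbed (jacobiAct ao bo x)) ∧
    ((0 : ℂ) ∉ eigenW (fun _ => 1) (jacobiAct a fun _ => 0) →
      (0 : ℂ) ∉ eigenW (fun _ => 1) (jacobiAct (fun n => a (n + 1)) fun _ => 0) →
      IsSelfAdjointW (fun _ => 1) (jacobiAct ao bo) ∧
      IsSelfAdjointW (fun _ => 1) (jacobiAct ae be) ∧
      spectrumW (fun _ => 1) (jacobiAct ao bo)
        = (fun z => z ^ 2) '' spectrumW (fun _ => 1) (jacobiAct a fun _ => 0) ∧
      spectrumW (fun _ => 1) (jacobiAct ae be)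
        = (fun z => z ^ 2) '' spectrumW (fun _ => 1) (jacobiAct a fun _ => 0) ∧
      eigenW (fun _ => 1) (jacobiAct ao bo)
        = (fun z => z ^ 2) '' eigenW (fun _ => 1) (jacobiAct a fun _ => 0) ∧
      eigenW (fun _ => 1) (jacobiAct ae be)
        = (fun z => z ^ 2) '' eigenW (fun _ => 1) (jacobiAct a fun _ => 0)) := by
  have hTe := jacobiAct_even_eq a ae be hae hbe
  have hTo := jacobiAct_odd_eq a ao bo hao hbo
  refine ⟨fun x => ?_, fun x => ?_, fun h0 h0' => ?_⟩
  · rw [hTe, evenEmbed_eq, evenEmbed_eq, jacobiAct_merge, jacobiAct_merge, map_zero, map_zero]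
  · rw [hTo, oddEmbed_eq, oddEmbed_eq, jacobiAct_merge, jacobiAct_merge, map_zero, map_zero]
  · have h := isFactorPair ha hsa h0 h0'
    rw [hTe, hTo]
    exact ⟨h.swap.isSelfAdjointW, h.isSelfAdjointW,
      h.swap.spectrumW_eq fun l => (jacobi_spectrum_iff a l).trans
        (not_congr ⟨BlockRegular.swap, BlockRegular.swap⟩),
      h.spectrumW_eq (jacobi_spectrum_iff a),
      h.swap.eigenW_eq fun l => (jacobi_eigen_iff a l).trans ⟨BlockEigen.swap, BlockEigen.swap⟩,
      h.eigenW_eq (jacobi_eigen_iff a)⟩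
end
end
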